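/- arXiv:1907.04636 — 2 statements merged into one kernel-verified Lean document; each statement's English description precedes it below -/
import Mathlib

section
/- Assume condition (R) with γ∈(0,2), and let α∈[0,1). Let ξ_{γ,σ,1}(q) be the smallest positive zero of Ψ_{γ,σ}'(·;q), where Ψ_{γ,σ}(x;q) = x^{γ+1} λ_{γ,σ}(x;q). Then the equation 1 + r·f_{γ,σ}''(r;q)/f_{γ,σ}'(r;q) = α has a unique root r₁ in the interval (0, ξ_{γ,σ,1}(q)), and the radius of convexity of order α of f_{γ,σ}(·;q) equals r₁. -/
noncomputable def qPochInf (a q : ℝ) : ℝ := ∏' k : ℕ, (1 - a * q ^ k)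

noncomputable def qGamma (q x : ℝ) : ℝ :=
  qPochInf q q * (1 - q) ^ (1 - x) / qPochInf (q ^ x) q

noncomputable def qML (γ σ q : ℝ) (z : ℂ) : ℂ :=
  ∑' n : ℕ,
    (((-1) ^ n * σ ^ (2 * n) * q ^ (n * (n - 1)) / qGamma q (2 * n + γ + 1) : ℝ) : ℂ) * z ^ (2 * n)

noncomputable def qMLR (γ σ q : ℝ) (x : ℝ) : ℝ :=
  ∑' n : ℕ,
    ((-1) ^ n * σ ^ (2 * n) * q ^ (n * (n - 1)) / qGamma q (2 * n + γ + 1)) * x ^ (2 * n)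

def condR (q γ : ℝ) : Prop :=
  (γ = 0 ∨ γ = 1) ∨
    (γ ∈ Set.Ioo (0 : ℝ) 2 ∧ γ ≠ 1 ∧
      1 < q⁻¹ * (1 - q) * (1 - q ^ (γ + 1)) * (1 - q ^ (γ + 2)))

noncomputable def radiusStarlike (α : ℝ) (f : ℂ → ℂ) : ℝ :=
  sSup {r : ℝ | 0 < r ∧ ∀ z : ℂ, 0 < ‖z‖ → ‖z‖ < r →
    α < (z * deriv f z / f z).re}

noncomputable def radiusConvex (α : ℝ) (f : ℂ → ℂ) : ℝ :=
  sSup {r : ℝ | 0 < r ∧ ∀ z : ℂ, ‖z‖ < r →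
    α < (1 + z * deriv (deriv f) z / deriv f z).re}

noncomputable def fML (γ σ q : ℝ) (z : ℂ) : ℂ :=
  Complex.exp ((1 / ((γ : ℂ) + 1)) *
    Complex.log (z ^ ((γ : ℂ) + 1) * (qGamma q (γ + 1) : ℂ) * qML γ σ q z))

noncomputable def gML (γ σ q : ℝ) (z : ℂ) : ℂ :=
  z * (qGamma q (γ + 1) : ℂ) * qML γ σ q z

noncomputable def hML (γ σ q : ℝ) (z : ℂ) : ℂ :=
  z * (qGamma q (γ + 1) : ℂ) *
    ∑' n : ℕ,
      (((-1) ^ n * σ ^ (2 * n) * q ^ (n * (n - 1)) / qGamma q (2 * n + γ + 1) : ℝ) : ℂ) * z ^ n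

noncomputable def hMLR (γ σ q : ℝ) (x : ℝ) : ℝ :=
  x * qGamma q (γ + 1) *
    ∑' n : ℕ,
      ((-1) ^ n * σ ^ (2 * n) * q ^ (n * (n - 1)) / qGamma q (2 * n + γ + 1)) * x ^ n

/-- Real restriction of the normalized function $f_{γ,σ}$ (principal branch). -/
noncomputable def fMLR (γ σ q : ℝ) (x : ℝ) : ℝ :=
  (x ^ (γ + 1) * qGamma q (γ + 1) * qMLR γ σ q x) ^ (1 / (γ + 1))

section
open PowerSeries Finset

def NN (f : PowerSeries ℝ) : Prop := ∀ n, 0 ≤ coeff n f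

noncomputable def LD (f : PowerSeries ℝ) : PowerSeries ℝ :=
  -(X * derivative ℝ f) * f⁻¹

theorem NN.mul {f g : PowerSeries ℝ} (hf : NN f) (hg : NN g) : NN (f * g) := by
  intro n
  rw [coeff_mul]
  exact sum_nonneg fun x _ => mul_nonneg (hf _) (hg _)

theorem NN.add {f g : PowerSeries ℝ} (hf : NN f) (hg : NN g) : NN (f + g) := by
  intro n
  rw [map_add]
  exact add_nonneg (hf _) (hg _)

theorem coeff_X_mul_der (f : PowerSeries ℝ) (n : ℕ) :
    coeff n (X * derivative ℝ f) = n * coeff n f := by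
  cases n with
  | zero => simp
  | succ n => rw [coeff_succ_X_mul, coeff_derivative]; push_cast; ring

theorem NN_inv {f : PowerSeries ℝ} (h0 : 0 < constantCoeff f)
    (h : ∀ n, 1 ≤ n → coeff n f ≤ 0) : NN f⁻¹ := by
  intro n
  induction n using Nat.strong_induction_on with
  | _ n ih =>
    rw [PowerSeries.coeff_inv]
    split_ifs with hn
    · exact inv_nonneg.2 h0.le
    · rw [neg_mul, ← mul_neg, ← Finset.sum_neg_distrib]
      refine mul_nonneg (inv_nonneg.2 h0.le) (sum_nonneg fun x hx => ?_)
      split_ifs with hx2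
      · have hx1 := mem_antidiagonal.1 hx
        have := h x.1 (by omega)
        have := ih x.2 hx2
        nlinarith
      · simp

theorem NN_LD_of_neg {f : PowerSeries ℝ} (h0 : 0 < constantCoeff f)
    (h : ∀ n, 1 ≤ n → coeff n f ≤ 0) : NN (LD f) := by
  refine NN.mul ?_ (NN_inv h0 h)
  intro n
  rw [map_neg, coeff_X_mul_der]
  rcases Nat.eq_zero_or_pos n with rfl | hn
  · simp
  · have := h n hn
    have : (0:ℝ) ≤ n := by positivity
    nlinarith

theorem mul_LD {f : PowerSeries ℝ} (h0 : constantCoeff f ≠ 0) :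
    f * LD f = -(X * derivative ℝ f) := by
  have := PowerSeries.mul_inv_cancel f h0
  unfold LD
  linear_combination (-(X * derivative ℝ f)) * this

theorem LD_unique {f s : PowerSeries ℝ} (h0 : constantCoeff f ≠ 0)
    (h : f * s = -(X * derivative ℝ f)) : s = LD f := by
  have := PowerSeries.mul_inv_cancel f h0
  unfold LD
  rw [← h]
  linear_combination (-s) * this

theorem LD_mul {f g : PowerSeries ℝ} (hf : constantCoeff f ≠ 0) (hg : constantCoeff g ≠ 0) :
    LD (f * g) = LD f + LD g := by
  symm
  apply LD_unique (by simp [hf, hg])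
  have h1 := mul_LD hf
  have h2 := mul_LD hg
  rw [Derivation.leibniz]
  simp only [smul_eq_mul]
  linear_combination g * h1 + f * h2

theorem coeff_zero_LD (f : PowerSeries ℝ) : coeff 0 (LD f) = 0 := by
  simp [LD]

theorem LD_rescale {f : PowerSeries ℝ} (hf : constantCoeff f ≠ 0) (p : ℝ) :
    LD (rescale p f) = rescale p (LD f) := by
  symm
  apply LD_unique
  · rw [← coeff_zero_eq_constantCoeff_apply, coeff_rescale]; simpa using hf
  · rw [← map_mul, mul_LD hf]
    ext n
    simp only [coeff_rescale, map_neg, coeff_X_mul_der]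
    ring

/-- if `X g' = s g`, with `s` nonneg and no constant term, then `g` is nonneg -/
theorem NN_of_ode {g s : PowerSeries ℝ} (hs : NN s) (hs0 : coeff 0 s = 0)
    (h0 : 0 ≤ coeff 0 g) (h : X * derivative ℝ g = s * g) : NN g := by
  intro n
  induction n using Nat.strong_induction_on with
  | _ n ih =>
    rcases Nat.eq_zero_or_pos n with rfl | hn
    · exact h0
    have h1 := congrArg (coeff n) h
    rw [coeff_X_mul_der, coeff_mul] at h1
    have h2 : 0 ≤ (n:ℝ) * coeff n g := by
      rw [h1]
      refine sum_nonneg fun x hx => ?_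
      have hx1 := mem_antidiagonal.1 hx
      by_cases hx2 : x.1 = 0
      · rw [hx2, hs0]; simp
      · exact mul_nonneg (hs _) (ih _ (by omega))
    have : (0:ℝ) < n := by exact_mod_cast hn
    exact nonneg_of_mul_nonneg_right h2 this

theorem NN_inv_of_LD {f : PowerSeries ℝ} (h0 : 0 < constantCoeff f) (h : NN (LD f)) :
    NN f⁻¹ := by
  have hi := PowerSeries.mul_inv_cancel f h0.ne'
  refine NN_of_ode h (coeff_zero_LD f) (by simp [h0.le]) ?_
  have hd := congrArg (derivative ℝ) hi
  rw [Derivation.leibniz] at hd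
  simp only [smul_eq_mul, Derivation.map_one_eq_zero] at hd
  unfold LD
  linear_combination (X * f⁻¹) * hd - X * derivative ℝ f⁻¹ * hi

theorem NN_LD_shift {f : PowerSeries ℝ} (h0 : 0 < constantCoeff f) (h : NN (LD f))
    {p c : ℝ} (hp0 : 0 ≤ p) (hp1 : p ≤ 1) (hc0 : 0 ≤ c) (hc1 : c < 1) :
    NN (LD (f - C c * rescale p f)) := by
  have hi := PowerSeries.mul_inv_cancel f h0.ne'
  set M := rescale p f * f⁻¹ with hM
  have hr0 : constantCoeff (rescale p f) = constantCoeff f := by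
    rw [← coeff_zero_eq_constantCoeff_apply, coeff_rescale]; simp
  have hM0 : constantCoeff M = 1 := by
    rw [hM, map_mul, hr0]; simp [h0.ne']
  have hfac : f - C c * rescale p f = f * (1 - C c * M) := by
    rw [hM]
    linear_combination (C c * rescale p f) * hi
  have hMf : rescale p f = f * M := by
    rw [hM]; linear_combination (-rescale p f) * hi
  have hML : LD f + LD M = rescale p (LD f) := by
    rw [← LD_rescale h0.ne', hMf, LD_mul h0.ne' (by simp [hM0])]
  have hMN : NN M := by
    refine NN_of_ode (s := LD f - rescale p (LD f)) ?_ ?_ (by simp [hM0]) ?_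
    · intro n
      rw [map_sub, coeff_rescale]
      have h1 := h n
      have h2 : p ^ n ≤ 1 := pow_le_one₀ hp0 hp1
      nlinarith
    · rw [map_sub, coeff_rescale, coeff_zero_LD]; simp
    · have := mul_LD (f := M) (by simp [hM0])
      linear_combination this - M * hML
  rw [hfac, LD_mul h0.ne' (by simp [hM0]; linarith)]
  refine h.add (NN_LD_of_neg (by simp [hM0]; linarith) ?_)
  intro n hn
  have := hMN n
  rw [map_sub, coeff_C_mul, coeff_one, if_neg (by omega)]
  nlinarith

theorem LD_rec {f : PowerSeries ℝ} (h0 : constantCoeff f ≠ 0) (n : ℕ) :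
    constantCoeff f * coeff n (LD f) = - (n * coeff n f) -
      ∑ i ∈ range n, coeff (n - i) f * coeff i (LD f) := by
  have h := congrArg (coeff n) (mul_LD h0)
  rw [mul_comm, coeff_mul, map_neg, coeff_X_mul_der,
    Finset.Nat.sum_antidiagonal_eq_sum_range_succ_mk, sum_range_succ] at h
  simp only [Nat.sub_self, coeff_zero_eq_constantCoeff_apply] at h
  rw [← h]
  have : ∀ i ∈ range n, coeff (n - i) f * coeff i (LD f) = coeff i (LD f) * coeff (n - i) f :=
    fun i _ => mul_comm _ _
  rw [sum_congr rfl this]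
  ring

open Filter Topology in
theorem NN_LD_lim {f : ℕ → PowerSeries ℝ} {g : PowerSeries ℝ}
    (hf0 : ∀ k, constantCoeff (f k) ≠ 0) (hg0 : constantCoeff g ≠ 0)
    (hlim : ∀ n, Tendsto (fun k => coeff n (f k)) atTop (𝓝 (coeff n g)))
    (h : ∀ k, NN (LD (f k))) : NN (LD g) := by
  have key : ∀ n, Tendsto (fun k => coeff n (LD (f k))) atTop (𝓝 (coeff n (LD g))) := by
    intro n
    induction n using Nat.strong_induction_on with
    | _ n ih =>
      have e : ∀ F : PowerSeries ℝ, constantCoeff F ≠ 0 → coeff n (LD F) =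
          (coeff 0 F)⁻¹ * (- (n * coeff n F) - ∑ i ∈ range n, coeff (n - i) F * coeff i (LD F)) := by
        intro F hF
        rw [← LD_rec hF]; simp [hF]
      rw [e g hg0]
      simp_rw [fun k => e (f k) (hf0 k)]
      refine ((hlim 0).inv₀ (by simpa using hg0)).mul (((hlim n).const_mul _).neg.sub
        (tendsto_finsetSum _ fun i hi => (hlim _).mul (ih i (mem_range.1 hi))))
  intro n
  exact ge_of_tendsto' (key n) fun k => h k n

theorem alt_half (n : ℕ) : ∀ b : ℕ → ℝ, (∀ i, i ≤ n → 0 ≤ b i) →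
    (∀ i, i < n → b (i + 1) ≤ b i / 2) →
    b 0 / 2 ≤ ∑ i ∈ range (n + 1), (-1) ^ i * b i ∧ ∑ i ∈ range (n + 1), (-1) ^ i * b i ≤ b 0 := by
  induction n with
  | zero => intro b h0 _; have := h0 0 le_rfl; simp; linarith
  | succ n ih =>
    intro b h0 h
    obtain ⟨h1, h2⟩ := ih (fun i => b (i + 1)) (fun i hi => h0 _ (by omega))
      (fun i hi => h _ (by omega))
    have e : ∑ i ∈ range (n + 1 + 1), (-1) ^ i * b i =
        b 0 - ∑ i ∈ range (n + 1), (-1) ^ i * b (i + 1) := by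
      rw [sum_range_succ', sub_eq_add_neg, ← sum_neg_distrib, add_comm]
      simp [pow_succ]
    rw [e]
    have := h 0 (by omega)
    have := h0 1 (by omega)
    simp only [zero_add] at *
    constructor <;> linarith

/-- Hutchinson type criterion -/
theorem NN_LD_hutch (e r : ℕ → ℝ) (he0 : e 0 = 1) (hr : ∀ n, 0 < r n)
    (her : ∀ n, e (n + 1) = r n * e n) (hr4 : ∀ n, r (n + 1) ≤ r n / 4) :
    NN (LD (mk fun n => (-1) ^ n * e n)) := by
  set f : PowerSeries ℝ := mk fun n => (-1) ^ n * e n with hf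
  have hepos : ∀ n, 0 < e n := by
    intro n
    induction n with
    | zero => simp [he0]
    | succ n ih => rw [her]; exact mul_pos (hr n) ih
  have hf0 : constantCoeff f = 1 := by
    rw [← coeff_zero_eq_constantCoeff_apply, hf, coeff_mk]; simp [he0]
  set s : ℕ → ℝ := fun n => coeff n (LD f) with hs
  have hs0 : s 0 = 0 := coeff_zero_LD f
  have hrn : ∀ n, r n ≤ r 0 / 4 ^ n := by
    intro n
    induction n with
    | zero => simp
    | succ n ih =>
      have := hr4 n
      rw [pow_succ, ← div_div]
      linarith
  -- recursion
  have hrec : ∀ m, s (m + 1) = (∑ i ∈ range m, (-1) ^ i * (e (i + 1) * s (m - i)))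
      + (-1) ^ m * ((m + 1 : ℕ) * e (m + 1)) := by
    intro m
    have h := congrArg (coeff (m + 1)) (mul_LD (f := f) (by simp [hf0]))
    rw [coeff_mul, map_neg, coeff_X_mul_der,
      Finset.Nat.sum_antidiagonal_eq_sum_range_succ_mk, sum_range_succ', sum_range_succ] at h
    simp only [hf, coeff_mk, Nat.sub_self, coeff_zero_LD, he0, pow_zero, mul_one, one_mul,
      mul_zero, add_zero, Nat.sub_zero] at h
    have e1 : s (m + 1) = coeff (m + 1) (LD f) := rfl
    rw [e1, eq_sub_of_add_eq' h, sub_eq_add_neg, ← sum_neg_distrib, add_comm]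
    congr 1
    · refine sum_congr rfl fun i hi => ?_
      have : m + 1 - (i + 1) = m - i := by omega
      rw [this, pow_succ]
      simp only [hs]
      ring
    · rw [pow_succ]; ring
  have key : ∀ m, 0 < s (m + 1) ∧ (1 ≤ m → r 0 / 2 * s m ≤ s (m + 1)) := by
    intro m
    induction m using Nat.strong_induction_on with
    | _ m ih =>
      rcases Nat.eq_zero_or_pos m with rfl | hm
      · have := hrec 0
        simp at this
        simp [this, hepos 1]
      have hspos : ∀ i, 1 ≤ i → i ≤ m → 0 < s i := by
        intro i hi him
        obtain ⟨j, rfl⟩ : ∃ j, i = j + 1 := ⟨i - 1, by omega⟩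
        exact (ih j (by omega)).1
      have hsm := hspos m hm le_rfl
      have main := (alt_half m (fun i => if i < m then e (i + 1) * s (m - i)
        else (m + 1 : ℕ) * e (m + 1)) ?_ ?_).1
      · rw [sum_range_succ] at main
        have e2 : ∑ i ∈ range m, (-1 : ℝ) ^ i * (if i < m then e (i + 1) * s (m - i)
            else (m + 1 : ℕ) * e (m + 1)) = ∑ i ∈ range m, (-1) ^ i * (e (i + 1) * s (m - i)) :=
          sum_congr rfl fun i hi => by rw [if_pos (mem_range.1 hi)]
        rw [e2] at main
        simp only [lt_irrefl, if_false] at main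
        rw [← hrec m, if_pos hm, Nat.sub_zero, zero_add, her 0, he0, mul_one] at main
        have : 0 < r 0 * s m := mul_pos (hr 0) hsm
        exact ⟨by linarith, fun _ => by linarith⟩
      · intro i hi
        split_ifs with h1
        · exact mul_nonneg (hepos _).le (hspos _ (by omega) (by omega)).le
        · exact mul_nonneg (by positivity) (hepos _).le
      · intro i hi
        rw [if_pos hi]
        have hr1 : r (i + 1) ≤ r 0 / 4 := by
          refine (hrn _).trans ?_
          have : (4:ℝ) ≤ 4 ^ (i + 1) := by
            rw [pow_succ]; have : (1:ℝ) ≤ 4 ^ i := one_le_pow₀ (by norm_num)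
            linarith
          exact div_le_div_of_nonneg_left (hr 0).le (by norm_num) this
        split_ifs with h1
        · rw [her (i + 1)]
          obtain ⟨j, hj⟩ : ∃ j, m - i = j + 1 := ⟨m - i - 1, by omega⟩
          have hj' : m - (i + 1) = j := by omega
          have h3 := (ih j (by omega)).2 (by omega)
          rw [hj, hj']
          have h4 : r (i + 1) * s j ≤ s (j + 1) / 2 := by
            have := hspos j (by omega) (by omega)
            nlinarith
          have := hepos (i + 1)
          nlinarith
        · have him : i + 1 = m := by omega
          have h5 : m - i = 1 := by omega
          have h6 : s 1 = r 0 := by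
            have := hrec 0
            simpa [her 0, he0] using this
          rw [h5, h6, him, her m]
          have h7 : ((m + 1 : ℕ) : ℝ) * r m ≤ r 0 / 2 := by
            have h8 := hrn m
            have h9 : ((m + 1 : ℕ) : ℝ) ≤ 4 ^ m / 2 := by
              have : ∀ k : ℕ, ((k + 1 + 1 : ℕ) : ℝ) ≤ 4 ^ (k + 1) / 2 := by
                intro k
                induction k with
                | zero => norm_num
                | succ k ih2 => rw [pow_succ]; push_cast at *; linarith
              rw [← him]; exact this i
            calc ((m + 1 : ℕ) : ℝ) * r m ≤ (4 ^ m / 2) * (r 0 / 4 ^ m) := by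
                  apply mul_le_mul h9 h8 (hr m).le (by positivity)
              _ = r 0 / 2 := by field_simp
          have := hepos m
          nlinarith
  intro n
  rcases n with _ | n
  · exact (coeff_zero_LD f).ge
  · exact (key n).1.le

/-- the base series `∑ (-1)^n p^(n(n-1)/2) x^n / (p;p)_n` -/
theorem NN_LD_base (a : ℕ → ℝ) (p : ℝ) (hp0 : 0 < p) (hp1 : p < 1) (ha0 : a 0 = 1)
    (ha : ∀ n, a (n + 1) * (1 - p ^ (n + 1)) = - p ^ n * a n) : NN (LD (mk a)) := by
  have hfe : mk a = (1 - X) * rescale p (mk a) := by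
    ext n
    rw [sub_mul, one_mul, map_sub]
    rcases n with _ | n
    · simp [ha0]
    · rw [coeff_succ_X_mul]
      simp only [coeff_rescale, coeff_mk]
      linear_combination ha n
  have h0 : constantCoeff (mk a) = 1 := by
    rw [← coeff_zero_eq_constantCoeff_apply, coeff_mk, ha0]
  have hr0 : constantCoeff (rescale p (mk a)) = 1 := by
    rw [← coeff_zero_eq_constantCoeff_apply, coeff_rescale]; simpa using h0
  have h1 : LD (mk a) = LD (1 - X) + rescale p (LD (mk a)) := by
    rw [← LD_rescale (by simp [h0]), ← LD_mul (by simp) (by simp [hr0]), ← hfe]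
  have hX : NN (LD (1 - X : PowerSeries ℝ)) := by
    refine NN_LD_of_neg (by simp) fun n hn => ?_
    rw [map_sub, coeff_one, coeff_X, if_neg (by omega)]
    split_ifs <;> simp
  intro n
  rcases n with _ | n
  · exact (coeff_zero_LD _).ge
  have h2 := congrArg (coeff (n + 1)) h1
  rw [map_add, coeff_rescale] at h2
  have h3 : (1 - p ^ (n + 1)) * coeff (n + 1) (LD (mk a)) = coeff (n + 1) (LD (1 - X)) := by
    linear_combination h2
  have h4 : 0 < 1 - p ^ (n + 1) := by
    have := pow_lt_one₀ hp0.le hp1 (n := n + 1) (by omega); linarith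
  exact nonneg_of_mul_nonneg_right (h3 ▸ hX (n + 1)) h4

theorem LD_C_mul {f : PowerSeries ℝ} (hf : constantCoeff f ≠ 0) {c : ℝ} (hc : c ≠ 0) :
    LD (C c * f) = LD f := by
  rw [LD_mul (by simpa using hc) hf]
  have : LD (C c : PowerSeries ℝ) = 0 := by simp [LD]
  rw [this, zero_add]

open Filter Topology in
theorem NN_LD_qsin (a : ℕ → ℝ) (p b τ : ℝ) (hp0 : 0 < p) (hp1 : p < 1) (hb0 : 0 < b)
    (hb1 : b < 1) (hτ : 0 < τ) (ha0 : a 0 = 1)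
    (ha : ∀ n, a (n + 1) * ((1 - p ^ (n + 1)) * (1 - b * p ^ n)) = - (τ * p ^ n) * a n) :
    NN (LD (mk a)) := by
  have hbp : ∀ k, 0 < 1 - b * p ^ k := by
    intro k
    have := pow_le_one₀ hp0.le hp1.le (n := k)
    have := pow_pos hp0 k
    nlinarith
  have hp1' : ∀ n : ℕ, 0 < 1 - p ^ (n + 1) := by
    intro n
    have := pow_lt_one₀ hp0.le hp1 (n := n + 1) (by omega); linarith
  have hB : ∀ n, 0 < ∏ k ∈ range n, (1 - b * p ^ k) := fun n => prod_pos fun k _ => hbp k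
  -- the base coefficients
  set A : ℕ → ℝ := fun n => a n / τ ^ n * ∏ k ∈ range n, (1 - b * p ^ k) with hA
  have hA0 : A 0 = 1 := by simp [hA, ha0]
  have hArec : ∀ n, A (n + 1) * (1 - p ^ (n + 1)) = - p ^ n * A n := by
    intro n
    simp only [hA]
    rw [prod_range_succ, pow_succ]
    have h1 := ha n
    have h2 : (τ ^ n) ≠ 0 := by positivity
    field_simp
    linear_combination (∏ x ∈ range n, (1 - b * p ^ x)) * h1
  have hbase := NN_LD_base A p hp0 hp1 hA0 hArec
  set W : ℕ → ℕ → ℝ := fun K n =>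
    (∏ k ∈ range n, (1 - b * p ^ (K + k))) / ∏ k ∈ range n, (1 - b * p ^ k) with hW
  have hc0 : ∀ K, constantCoeff (mk fun n => A n * W K n) = 1 := by
    intro K
    rw [← coeff_zero_eq_constantCoeff_apply, coeff_mk]; simp [hA0, hW]
  have hK : ∀ K, NN (LD (mk fun n => A n * W K n)) := by
    intro K
    induction K with
    | zero =>
      convert hbase using 3
      funext n
      simp only [hW, zero_add]
      rw [div_self (hB n).ne', mul_one]
    | succ K ih =>
      have e : C (1 - b * p ^ K) * (mk fun n => A n * W (K + 1) n) =
          (mk fun n => A n * W K n) - C (b * p ^ K) * rescale p (mk fun n => A n * W K n) := by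
        ext n
        rw [coeff_C_mul, map_sub (coeff n), coeff_C_mul, coeff_rescale]
        simp only [coeff_mk, hW]
        have h1 : (1 - b * p ^ K) * ∏ k ∈ range n, (1 - b * p ^ (K + 1 + k)) =
            (1 - b * p ^ (K + n)) * ∏ k ∈ range n, (1 - b * p ^ (K + k)) := by
          rw [mul_comm (1 - b * p ^ (K + n)), ← prod_range_succ (fun k => 1 - b * p ^ (K + k)),
            prod_range_succ', mul_comm]
          simp only [add_zero, add_assoc, add_comm 1]
        have h2 := (hB n).ne'
        rw [pow_add] at h1
        field_simp
        linear_combination A n * h1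
      rw [← LD_C_mul (by simp [hc0]) (hbp K).ne', e]
      refine NN_LD_shift (by simp [hc0]) ih hp0.le hp1.le ?_ ?_
      · positivity
      · have := hbp K; linarith
  have hlim : NN (LD (mk fun n => A n * (1 / ∏ k ∈ range n, (1 - b * p ^ k)))) := by
    refine NN_LD_lim (f := fun K => mk fun n => A n * W K n) (fun K => by simp [hc0])
      ?_ ?_ hK
    · rw [← coeff_zero_eq_constantCoeff_apply, coeff_mk]; simp [hA0]
    · intro n
      simp only [coeff_mk, hW]
      refine Tendsto.const_mul _ (Tendsto.div_const ?_ _)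
      have : (1:ℝ) = ∏ k ∈ range n, (1:ℝ) := by simp
      rw [this]
      refine tendsto_finsetProd _ fun k _ => ?_
      have h3 : Tendsto (fun K : ℕ => p ^ (K + k)) atTop (𝓝 0) :=
        (tendsto_add_atTop_iff_nat k).2 (tendsto_pow_atTop_nhds_zero_of_lt_one hp0.le hp1)
      simpa using (h3.const_mul b).const_sub 1
  have hfin : mk a = rescale τ (mk fun n => A n * (1 / ∏ k ∈ range n, (1 - b * p ^ k))) := by
    ext n
    simp only [coeff_rescale, coeff_mk, hA]
    have := (hB n).ne'
    field_simp
  rw [hfin, LD_rescale]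
  · intro n
    rw [coeff_rescale]
    exact mul_nonneg (by positivity) (hlim n)
  · rw [← coeff_zero_eq_constantCoeff_apply, coeff_mk]; simp [hA0]

theorem LD_euler {a : ℕ → ℝ} (ha0 : a 0 = 1) (h : NN (LD (mk a))) {c : ℝ} (hc : 0 ≤ c) :
    ∃ D : PowerSeries ℝ, NN D ∧ LD (mk fun n => (1 + c * n) * a n) = LD (mk a) + D := by
  have h0 : constantCoeff (mk a) = 1 := by
    rw [← coeff_zero_eq_constantCoeff_apply, coeff_mk, ha0]
  have h1 := mul_LD (f := mk a) (by simp [h0])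
  have hL0 : constantCoeff (LD (mk a)) = 0 := by
    rw [← coeff_zero_eq_constantCoeff_apply, coeff_zero_LD]
  have e : (mk fun n => (1 + c * n) * a n) = mk a * (1 - C c * LD (mk a)) := by
    have : mk a * (1 - C c * LD (mk a)) = mk a + C c * (X * derivative ℝ (mk a)) := by
      linear_combination (-C c) * h1
    rw [this]
    ext n
    rw [map_add, coeff_C_mul, coeff_X_mul_der]
    simp only [coeff_mk]
    ring
  refine ⟨LD (1 - C c * LD (mk a)), NN_LD_of_neg (by simp [hL0]) ?_, ?_⟩
  · intro n hn
    rw [map_sub, coeff_C_mul, coeff_one, if_neg (by omega)]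
    have := h n
    nlinarith
  · rw [e, LD_mul (by simp [h0]) (by simp [hL0])]


def Ent (p : ℕ → ℝ) : Prop := ∀ R : ℝ, 0 ≤ R → Summable fun n => |p n| * R ^ n

noncomputable def ev (p : ℕ → ℝ) (z : ℂ) : ℂ := ∑' n, (p n : ℂ) * z ^ n

noncomputable def evR (p : ℕ → ℝ) (x : ℝ) : ℝ := ∑' n, p n * x ^ n

theorem Ent.sumC {p : ℕ → ℝ} (hp : Ent p) (z : ℂ) : Summable fun n => (p n : ℂ) * z ^ n := by
  refine Summable.of_norm ?_
  simpa [norm_mul, norm_pow] using hp ‖z‖ (norm_nonneg z)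

theorem Ent.hasSum {p : ℕ → ℝ} (hp : Ent p) (z : ℂ) :
    HasSum (fun n => (p n : ℂ) * z ^ n) (ev p z) := (hp.sumC z).hasSum

theorem ev_ofReal (p : ℕ → ℝ) (x : ℝ) : ev p (x : ℂ) = (evR p x : ℂ) := by
  unfold ev evR
  rw [Complex.ofReal_tsum]
  push_cast
  rfl

theorem Ent.euler {p : ℕ → ℝ} (hp : Ent p) (c : ℝ) : Ent fun n => (1 + c * n) * p n := by
  intro R hR
  have h := (hp (2 * R) (by positivity)).mul_left (1 + |c|)
  refine Summable.of_nonneg_of_le (fun n => by positivity) (fun n => ?_) h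
  have h1 : (n : ℝ) ≤ 2 ^ n := by exact_mod_cast n.lt_two_pow_self.le
  have h2 : (1 : ℝ) ≤ 2 ^ n := one_le_pow₀ (by norm_num)
  have h3 : |1 + c * n| ≤ (1 + |c|) * 2 ^ n := by
    refine (abs_add_le _ _).trans ?_
    rw [abs_mul, abs_one, Nat.abs_cast]
    have := abs_nonneg c
    nlinarith
  rw [abs_mul, mul_pow]
  have h4 : 0 ≤ |p n| * R ^ n := by positivity
  nlinarith

theorem Ent.smul {p : ℕ → ℝ} (hp : Ent p) (c : ℝ) : Ent fun n => c * p n := by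
  intro R hR
  refine ((hp R hR).mul_left |c|).congr fun n => ?_
  rw [abs_mul]; ring

theorem Ent.sub {p r : ℕ → ℝ} (hp : Ent p) (hr : Ent r) : Ent fun n => p n - r n := by
  intro R hR
  refine Summable.of_nonneg_of_le (fun n => by positivity) (fun n => ?_) ((hp R hR).add (hr R hR))
  rw [← add_mul]
  exact mul_le_mul_of_nonneg_right (abs_sub _ _) (by positivity)

theorem Ent.theta {p : ℕ → ℝ} (hp : Ent p) : Ent fun n => n * p n := by
  have := (hp.euler 1).sub hp
  convert this using 2
  ring

theorem Ent.derivEnt {p : ℕ → ℝ} (hp : Ent p) : Ent fun n => (n + 1 : ℕ) * p (n + 1) := by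
  intro R hR
  have h := (summable_nat_add_iff 1).2 (hp.theta (R + 1) (by positivity))
  refine Summable.of_nonneg_of_le (fun n => by positivity) (fun n => ?_) h
  refine mul_le_mul_of_nonneg_left ?_ (by positivity)
  rw [pow_succ]
  have h1 : R ^ n ≤ (R + 1) ^ n := pow_le_pow_left₀ hR (by linarith) n
  have h2 : 0 ≤ (R + 1) ^ n := by positivity
  nlinarith

theorem Ent.hasDerivAt {p : ℕ → ℝ} (hp : Ent p) (z : ℂ) :
    HasDerivAt (ev p) (ev (fun n => (n + 1 : ℕ) * p (n + 1)) z) z := by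
  have hu := hp (‖z‖ + 1) (by positivity)
  have hdiff : ∀ i : ℕ, DifferentiableOn ℂ (fun w : ℂ => (p i : ℂ) * w ^ i)
      (Metric.ball 0 (‖z‖ + 1)) := fun i => by fun_prop
  have hle : ∀ (i : ℕ) (w : ℂ), w ∈ Metric.ball (0 : ℂ) (‖z‖ + 1) →
      ‖(p i : ℂ) * w ^ i‖ ≤ |p i| * (‖z‖ + 1) ^ i := by
    intro i w hw
    rw [mem_ball_zero_iff] at hw
    rw [norm_mul, norm_pow, Complex.norm_real, Real.norm_eq_abs]
    gcongr
  have hz : z ∈ Metric.ball (0 : ℂ) (‖z‖ + 1) := by simp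
  have h1 := Complex.hasSum_deriv_of_summable_norm hu hdiff Metric.isOpen_ball hle hz
  have h2 := Complex.differentiableOn_tsum_of_summable_norm hu hdiff Metric.isOpen_ball hle
  have h3 := (h2.differentiableAt (Metric.isOpen_ball.mem_nhds hz)).hasDerivAt
  have h4 : ev (fun n => (n + 1 : ℕ) * p (n + 1)) z =
      deriv (fun w : ℂ => ∑' i : ℕ, (p i : ℂ) * w ^ i) z := by
    rw [← h1.tsum_eq, h1.summable.tsum_eq_zero_add]
    simp [ev]
    refine tsum_congr fun n => ?_
    ring
  rw [h4]
  exact h3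

theorem ev_theta (p : ℕ → ℝ) (hp : Ent p) (z : ℂ) :
    z * ev (fun n => (n + 1 : ℕ) * p (n + 1)) z = ev (fun n => n * p n) z := by
  rw [ev, ev, (hp.theta.sumC z).tsum_eq_zero_add, ← tsum_mul_left]
  simp
  refine tsum_congr fun n => ?_
  ring

theorem Ent.hasDerivAtR {p : ℕ → ℝ} (hp : Ent p) (x : ℝ) :
    HasDerivAt (evR p) (evR (fun n => (n + 1 : ℕ) * p (n + 1)) x) x := by
  have := (hp.hasDerivAt (x : ℂ)).real_of_complex
  simpa only [ev_ofReal, Complex.ofReal_re] using this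

theorem ev_euler (p : ℕ → ℝ) (hp : Ent p) (c : ℝ) (z : ℂ) :
    ev (fun n => (1 + c * n) * p n) z =
      ev p z + c * (z * ev (fun n => (n + 1 : ℕ) * p (n + 1)) z) := by
  rw [ev_theta p hp, ev, ev, ev, ← tsum_mul_left, ← (hp.sumC z).tsum_add ((hp.theta.sumC z).mul_left _)]
  refine tsum_congr fun n => ?_
  push_cast
  ring

theorem pow_series_unique {a : ℕ → ℂ} {R : ℝ} (hR : 0 < R)
    (h : ∀ z : ℂ, ‖z‖ < R → HasSum (fun n => a n * z ^ n) 0) : ∀ n, a n = 0 := by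
  have h1 : HasFPowerSeriesAt (fun _ : ℂ => (0 : ℂ)) (FormalMultilinearSeries.ofScalars ℂ a) 0 := by
    rw [hasFPowerSeriesAt_iff]
    filter_upwards [Metric.ball_mem_nhds (0 : ℂ) hR] with z hz
    rw [mem_ball_zero_iff] at hz
    simpa [FormalMultilinearSeries.coeff_ofScalars, mul_comm] using h z hz
  have h2 := h1.eq_zero
  intro n
  have := congrArg (fun q => FormalMultilinearSeries.coeff q n) h2
  simp only [FormalMultilinearSeries.coeff_ofScalars] at this
  rw [this]
  rfl

theorem hasSum_quot {p w : ℕ → ℝ} {u : PowerSeries ℝ} (hp : Ent p) (hw : Ent w) (hp0 : p 0 ≠ 0)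
    (hform : mk p * u = mk w) {R : ℝ} (hR : 0 < R) (hne : ∀ z : ℂ, ‖z‖ < R → ev p z ≠ 0) :
    ∀ z : ℂ, ‖z‖ < R → HasSum (fun n => ((coeff n u : ℝ) : ℂ) * z ^ n) (ev w z / ev p z) := by
  have hd : ∀ {p : ℕ → ℝ}, Ent p → Differentiable ℂ (ev p) :=
    fun hp z => (hp.hasDerivAt z).differentiableAt
  have hG : DifferentiableOn ℂ (fun z => ev w z / ev p z) (Metric.ball 0 R) := by
    intro z hz
    rw [mem_ball_zero_iff] at hz
    exact ((hd hw z).div (hd hp z) (hne z hz)).differentiableWithinAt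
  set t : ℕ → ℂ := fun n => (n.factorial : ℂ)⁻¹ * iteratedDeriv n (fun z => ev w z / ev p z) 0
    with ht
  have hT : ∀ z : ℂ, ‖z‖ < R → HasSum (fun n => t n * z ^ n) (ev w z / ev p z) := by
    intro z hz
    have := Complex.hasSum_taylorSeries_on_ball hG (z := z) (by simpa using hz)
    simp only [sub_zero, smul_eq_mul] at this
    convert! this using 1
    funext n
    simp only [ht]; ring
  have hconv : ∀ n, ∑ x ∈ antidiagonal n, (p x.1 : ℂ) * t x.2 = w n := by
    intro n
    rw [← sub_eq_zero]
    revert n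
    refine pow_series_unique hR fun z hz => ?_
    have h1 := (hT z hz)
    have h2 := hp.hasSum z
    have h3 := tsum_mul_tsum_eq_tsum_sum_antidiagonal_of_summable_norm h2.summable.norm
      h1.summable.norm
    have h4 := summable_norm_sum_mul_antidiagonal_of_summable_norm h2.summable.norm
      h1.summable.norm
    have h5 := h4.of_norm.hasSum
    rw [← h3, h2.tsum_eq, h1.tsum_eq, mul_div_cancel₀ _ (hne z hz)] at h5
    have h6 := h5.sub (hw.hasSum z)
    rw [sub_self] at h6
    convert! h6 using 1
    funext n
    rw [sub_mul, Finset.sum_mul]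
    congr 1
    refine sum_congr rfl fun x hx => ?_
    rw [← mem_antidiagonal.1 hx, pow_add]
    ring
  have hu : ∀ n, ∑ x ∈ antidiagonal n, (p x.1 : ℂ) * ((coeff x.2 u : ℝ) : ℂ) = w n := by
    intro n
    have := congrArg (coeff n) hform
    rw [coeff_mul] at this
    simp only [coeff_mk] at this
    rw [← this]; push_cast; rfl
  have htu : ∀ n, t n = ((coeff n u : ℝ) : ℂ) := by
    intro n
    induction n using Nat.strong_induction_on with
    | _ n ih =>
      have h1 := (hconv n).trans (hu n).symm
      have hmem : ((0 : ℕ), n) ∈ antidiagonal n := by simp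
      rw [← Finset.add_sum_erase _ _ hmem, ← Finset.add_sum_erase _ _ hmem] at h1
      have h2 : ∑ x ∈ (antidiagonal n).erase (0, n), (p x.1 : ℂ) * t x.2 =
          ∑ x ∈ (antidiagonal n).erase (0, n), (p x.1 : ℂ) * ((coeff x.2 u : ℝ) : ℂ) := by
        refine sum_congr rfl fun x hx => ?_
        rw [mem_erase, HasAntidiagonal.mem_antidiagonal] at hx
        rw [ih x.2]
        rcases x with ⟨x, y⟩
        simp only [ne_eq, Prod.mk.injEq] at hx
        dsimp only
        omega
      rw [h2] at h1
      have h3 := add_right_cancel h1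
      exact mul_left_cancel₀ (by exact_mod_cast hp0) h3
  intro z hz
  simpa only [htu] using hT z hz

/-- no complex zeros before the first real one -/
theorem no_zeros {p : ℕ → ℝ} (hp : Ent p) (hp0 : p 0 = 1) (hN : NN (LD (mk p))) {R : ℝ}
    (hne : ∀ x : ℝ, 0 < x → x < R → evR p x ≠ 0) : ∀ z : ℂ, ‖z‖ < R → ev p z ≠ 0 := by
  intro z1 hz1 hz10
  have hcont : Continuous (ev p) :=
    (show Differentiable ℂ (ev p) from fun z => (hp.hasDerivAt z).differentiableAt).continuous
  have hcpt : IsCompact (Metric.closedBall (0 : ℂ) ‖z1‖ ∩ {z | ev p z = 0}) :=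
    (isCompact_closedBall _ _).inter_right (isClosed_singleton.preimage hcont)
  obtain ⟨t0, ht0, hmin⟩ := hcpt.exists_isMinOn ⟨z1, by simp, hz10⟩ continuous_norm.continuousOn
  have h0 : ev p 0 = 1 := by
    have := ev_ofReal p 0
    rw [Complex.ofReal_zero] at this
    rw [this, evR, tsum_eq_single 0 (by intro n hn; simp [hn])]
    simp [hp0]
  have ht0' : ‖t0‖ ≤ ‖z1‖ := by simpa using ht0.1
  have ht00 : ev p t0 = 0 := ht0.2
  have htpos : 0 < ‖t0‖ := by
    rw [norm_pos_iff]; rintro rfl; rw [h0] at ht00; exact one_ne_zero ht00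
  have hball : ∀ z : ℂ, ‖z‖ < ‖t0‖ → ev p z ≠ 0 := by
    intro z hz h
    have := hmin (show z ∈ _ from ⟨by simpa using (hz.trans_le ht0').le, h⟩)
    simp only [Set.mem_ofPred_eq] at this
    linarith
  have hone : Ent fun n => if n = 0 then (1:ℝ) else 0 := by
    intro R _
    refine summable_of_ne_finset_zero (s := {0}) fun n hn => ?_
    simp at hn; simp [hn]
  have hc0 : constantCoeff (mk p) = 1 := by
    rw [← coeff_zero_eq_constantCoeff_apply, coeff_mk, hp0]
  have hU := hasSum_quot (u := (mk p)⁻¹) hp hone (by simp [hp0]) (by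
    rw [PowerSeries.mul_inv_cancel _ (by simp [hc0])]
    ext n; rw [coeff_one, coeff_mk]) htpos hball
  have hev1 : ∀ z, ev (fun n => if n = 0 then (1:ℝ) else 0) z = 1 := by
    intro z
    rw [ev, tsum_eq_single 0 (by intro n hn; simp [hn])]; simp
  have hUN := NN_inv_of_LD (by simp [hc0]) hN
  have hle : ∀ z : ℂ, ‖z‖ < ‖t0‖ → ‖ev p (‖z‖ : ℂ)‖ ≤ ‖ev p z‖ := by
    intro z hz
    have h1 := hU z hz
    have h2 := hU (‖z‖ : ℂ) (by simpa using hz)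
    rw [hev1] at h1 h2
    have h3 : ‖1 / ev p z‖ ≤ ‖1 / ev p (‖z‖ : ℂ)‖ := by
      rw [← h1.tsum_eq, ← h2.tsum_eq]
      refine (norm_tsum_le_tsum_norm h1.summable.norm).trans ?_
      have : ∀ n, (((coeff n) (mk p)⁻¹ : ℝ) : ℂ) * (‖z‖ : ℂ) ^ n =
          ((‖(((coeff n) (mk p)⁻¹ : ℝ) : ℂ) * z ^ n‖ : ℝ) : ℂ) := by
        intro n
        rw [norm_mul, norm_pow, Complex.norm_real, Real.norm_of_nonneg (hUN n)]
        push_cast; rfl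
      simp_rw [this]
      rw [← Complex.ofReal_tsum, Complex.norm_real]
      exact Real.le_norm_self _
    rw [norm_div, norm_div, norm_one] at h3
    exact (one_div_le_one_div (norm_pos_iff.2 (hball _ hz))
      (norm_pos_iff.2 (hball _ (by simpa using hz)))).1 h3
  have hlim : ‖ev p (‖t0‖ : ℂ)‖ ≤ ‖ev p t0‖ := by
    have c1 : Filter.Tendsto (fun s : ℝ => ‖ev p (((‖(s : ℂ) * t0‖ : ℝ)) : ℂ)‖)
        (nhdsWithin 1 (Set.Iio 1)) (nhds ‖ev p (‖t0‖ : ℂ)‖) := by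
      have : Continuous fun s : ℝ => ‖ev p (((‖(s : ℂ) * t0‖ : ℝ)) : ℂ)‖ := by fun_prop
      have h := this.tendsto 1
      simp only [Complex.ofReal_one, one_mul] at h
      exact h.mono_left nhdsWithin_le_nhds
    have c2 : Filter.Tendsto (fun s : ℝ => ‖ev p ((s : ℂ) * t0)‖)
        (nhdsWithin 1 (Set.Iio 1)) (nhds ‖ev p t0‖) := by
      have : Continuous fun s : ℝ => ‖ev p ((s : ℂ) * t0)‖ := by fun_prop
      have h := this.tendsto 1
      simp only [Complex.ofReal_one, one_mul] at h
      exact h.mono_left nhdsWithin_le_nhds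
    refine le_of_tendsto_of_tendsto c1 c2 ?_
    filter_upwards [Ioo_mem_nhdsLT (show (0:ℝ) < 1 by norm_num)] with s hs
    apply hle
    rw [norm_mul, Complex.norm_real, Real.norm_of_nonneg hs.1.le]
    nlinarith [hs.2]
  rw [ht00, norm_zero, ev_ofReal, Complex.norm_real, norm_le_zero_iff] at hlim
  exact hne _ htpos (ht0'.trans_lt hz1) hlim


theorem qPoch_facts {q a : ℝ} (hq0 : 0 < q) (hq1 : q < 1) (ha0 : 0 ≤ a) (ha1 : a < 1) :
    0 < qPochInf a q ∧ qPochInf a q = (1 - a) * qPochInf (a * q) q := by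
  have hpos : ∀ k : ℕ, 0 < 1 - a * q ^ k := by
    intro k
    have := pow_le_one₀ hq0.le hq1.le (n := k)
    have := pow_pos hq0 k
    nlinarith
  have hs : Summable fun k : ℕ => -(a * q ^ k) :=
    ((summable_geometric_of_lt_one hq0.le hq1).mul_left a).neg
  have hlog : Summable fun k : ℕ => Real.log (1 - a * q ^ k) := by
    have := Real.summable_log_one_add_of_summable hs
    simpa only [← sub_eq_add_neg] using this
  have hm : HasProd (fun k : ℕ => 1 - a * q ^ k) (Real.exp (∑' k : ℕ, Real.log (1 - a * q ^ k))) :=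
    Real.hasProd_of_hasSum_log hpos hlog.hasSum
  have hlog' : Summable fun k : ℕ => Real.log (1 - a * q * q ^ k) := by
    have := (summable_nat_add_iff 1).2 hlog
    refine this.congr fun k => ?_
    rw [pow_succ]; ring_nf
  constructor
  · unfold qPochInf
    rw [hm.tprod_eq]
    exact Real.exp_pos _
  · have hpos' : ∀ k : ℕ, 0 < 1 - a * q * q ^ k := by
      intro k
      have := hpos (k + 1)
      rw [pow_succ] at this
      linarith
    unfold qPochInf
    rw [← Real.rexp_tsum_eq_tprod hpos hlog, ← Real.rexp_tsum_eq_tprod hpos' hlog',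
      hlog.tsum_eq_zero_add, Real.exp_add, Real.exp_log (hpos 0)]
    have e : ∑' k : ℕ, Real.log (1 - a * q ^ (k + 1)) = ∑' k : ℕ, Real.log (1 - a * q * q ^ k) := by
      refine tsum_congr fun k => ?_
      rw [pow_succ]; ring_nf
    rw [e, pow_zero, mul_one]

theorem qGamma_pos {q x : ℝ} (hq0 : 0 < q) (hq1 : q < 1) (hx : 0 < x) : 0 < qGamma q x := by
  unfold qGamma
  have h1 := (qPoch_facts hq0 hq1 hq0.le hq1).1
  have h2 := (qPoch_facts hq0 hq1 (Real.rpow_pos_of_pos hq0 x).le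
    (Real.rpow_lt_one hq0.le hq1 hx)).1
  have h3 : 0 < (1 - q) ^ (1 - x) := Real.rpow_pos_of_pos (by linarith) _
  positivity

theorem qGamma_succ {q x : ℝ} (hq0 : 0 < q) (hq1 : q < 1) (hx : 0 < x) :
    qGamma q (x + 1) = (1 - q ^ x) / (1 - q) * qGamma q x := by
  unfold qGamma
  have h1q : 0 < 1 - q := by linarith
  have hlt := Real.rpow_lt_one hq0.le hq1 hx
  have h2 := qPoch_facts hq0 hq1 (Real.rpow_pos_of_pos hq0 x).le hlt
  have h4 : q ^ (x + 1) = q ^ x * q := by rw [Real.rpow_add hq0, Real.rpow_one]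
  have h5 : (1 - q) ^ (1 - x) = (1 - q) ^ (1 - (x + 1)) * (1 - q) := by
    rw [← Real.rpow_add_one h1q.ne']; ring_nf
  have h6 : 0 < qPochInf (q ^ x * q) q := by
    have := h2.1
    rw [h2.2] at this
    exact pos_of_mul_pos_right this (by linarith)
  rw [h4, h2.2, h5]
  have : (1 - q ^ x) ≠ 0 := by linarith
  field_simp

noncomputable def cML (γ σ q : ℝ) (n : ℕ) : ℝ :=
  qGamma q (γ + 1) * ((-1) ^ n * σ ^ (2 * n) * q ^ (n * (n - 1)) / qGamma q (2 * n + γ + 1))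

noncomputable def rML (γ σ q : ℝ) (n : ℕ) : ℝ :=
  σ ^ 2 * q ^ (2 * n) * (1 - q) ^ 2 / ((1 - q ^ (2 * n + γ + 1)) * (1 - q ^ (2 * n + γ + 2)))

theorem one_sub_pos {γ q : ℝ} (hq0 : 0 < q) (hq1 : q < 1) (hγ : 0 < γ) (n : ℕ) (b : ℝ) (hb : 0 < b) : 0 < 1 - q ^ (2 * n + γ + b) := by
  have := Real.rpow_lt_one hq0.le hq1 (show (0:ℝ) < 2 * n + γ + b by positivity)
  linarith

theorem cML_zero {γ σ q : ℝ} (hq0 : 0 < q) (hq1 : q < 1) (hγ : 0 < γ) : cML γ σ q 0 = 1 := by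
  have := qGamma_pos hq0 hq1 (show 0 < γ + 1 by linarith)
  simp [cML]
  field_simp

theorem cML_succ {γ σ q : ℝ} (hq0 : 0 < q) (hq1 : q < 1) (hγ : 0 < γ) (n : ℕ) : cML γ σ q (n + 1) = - (rML γ σ q n * cML γ σ q n) := by
  have hn : (0:ℝ) ≤ n := by positivity
  have e1 : (2 * ((n + 1 : ℕ) : ℝ) + γ + 1) = (2 * n + γ + 1 + 1) + 1 := by push_cast; ring
  have hp := qGamma_pos hq0 hq1 (show 0 < 2 * (n:ℝ) + γ + 1 by linarith)
  unfold cML rML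
  rw [e1, qGamma_succ hq0 hq1 (x := 2 * (n:ℝ) + γ + 1 + 1) (by linarith),
    qGamma_succ hq0 hq1 (x := 2 * (n:ℝ) + γ + 1) (by linarith)]
  have e2 : 2 * (n:ℝ) + γ + 1 + 1 = 2 * n + γ + 2 := by ring
  rw [e2]
  have h1 := (one_sub_pos hq0 hq1 hγ n 1 one_pos).ne'
  have h2 := (one_sub_pos hq0 hq1 hγ n 2 two_pos).ne'
  have h3 : (n + 1) * (n + 1 - 1) = n * (n - 1) + 2 * n := by
    rcases n with _ | n
    · simp
    · simp; ring
  have h4 : 1 - q ≠ 0 := by linarith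
  rw [h3]
  field_simp
  ring


theorem rML_pos {γ σ q : ℝ} (hq0 : 0 < q) (hq1 : q < 1) (hσ : 0 < σ) (hγ : 0 < γ) (n : ℕ) : 0 < rML γ σ q n := by
  have h1 := (one_sub_pos hq0 hq1 hγ n 1 one_pos)
  have h2 := (one_sub_pos hq0 hq1 hγ n 2 two_pos)
  have h4 : 0 < 1 - q := by linarith
  unfold rML
  positivity

theorem rML_succ_le {γ σ q : ℝ} (hq0 : 0 < q) (hq1 : q < 1) (hσ : 0 < σ) (hγ : 0 < γ) (n : ℕ) : rML γ σ q (n + 1) ≤ q ^ 2 * rML γ σ q n := by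
  have h1 := (one_sub_pos hq0 hq1 hγ n 1 one_pos)
  have h2 := (one_sub_pos hq0 hq1 hγ n 2 two_pos)
  have h4 : 0 < 1 - q := by linarith
  have m : ∀ b, 1 - q ^ (2 * (n:ℝ) + γ + b) ≤ 1 - q ^ (2 * ((n + 1 : ℕ):ℝ) + γ + b) := by
    intro b
    have := Real.rpow_le_rpow_of_exponent_ge hq0 hq1.le
      (show 2 * (n:ℝ) + γ + b ≤ 2 * ((n + 1 : ℕ):ℝ) + γ + b by push_cast; linarith)
    linarith
  unfold rML
  rw [← mul_div_assoc]
  have : σ ^ 2 * q ^ (2 * (n + 1)) * (1 - q) ^ 2 = q ^ 2 * (σ ^ 2 * q ^ (2 * n) * (1 - q) ^ 2) := by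
    ring
  rw [this]
  refine div_le_div_of_nonneg_left (by positivity) (by positivity) ?_
  exact mul_le_mul (m 1) (m 2) h2.le (h1.le.trans (m 1))

theorem cML_ent {γ σ q : ℝ} (hq0 : 0 < q) (hq1 : q < 1) (hσ : 0 < σ) (hγ : 0 < γ) : Ent (cML γ σ q) := by
  have hr : Filter.Tendsto (rML γ σ q) Filter.atTop (nhds 0) := by
    have hb : ∀ n, rML γ σ q n ≤ (q ^ 2) ^ n * rML γ σ q 0 := by
      intro n
      induction n with
      | zero => simp
      | succ n ih =>
        refine (rML_succ_le hq0 hq1 hσ hγ n).trans ?_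
        have : 0 < q ^ 2 := by positivity
        have := mul_le_mul_of_nonneg_left ih this.le
        calc q ^ 2 * rML γ σ q n ≤ q ^ 2 * ((q ^ 2) ^ n * rML γ σ q 0) := this
          _ = (q ^ 2) ^ (n + 1) * rML γ σ q 0 := by ring
    have h1 : Filter.Tendsto (fun n : ℕ => (q ^ 2) ^ n * rML γ σ q 0) Filter.atTop (nhds 0) := by
      simpa using (tendsto_pow_atTop_nhds_zero_of_lt_one (r := q ^ 2) (by positivity)
        (by nlinarith)).mul_const (rML γ σ q 0)
    exact squeeze_zero (fun n => (rML_pos hq0 hq1 hσ hγ n).le) hb h1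
  have hne : ∀ n, cML γ σ q n ≠ 0 := by
    intro n
    induction n with
    | zero => rw [cML_zero hq0 hq1 hγ]; exact one_ne_zero
    | succ n ih =>
      rw [cML_succ hq0 hq1 hγ]
      exact neg_ne_zero.2 (mul_ne_zero (rML_pos hq0 hq1 hσ hγ n).ne' ih)
  intro R hR
  rcases hR.eq_or_lt with rfl | hR
  · refine summable_of_ne_finset_zero (s := {0}) fun n hn => ?_
    simp at hn; simp [hn]
  refine summable_of_ratio_test_tendsto_lt_one (l := 0) one_pos ?_ ?_
  · refine Filter.Eventually.of_forall fun n => ?_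
    have := hne n
    positivity
  · have h2 := hr.mul_const R
    rw [zero_mul] at h2
    refine h2.congr fun n => ?_
    have h3 := hne n
    have h4 := rML_pos hq0 hq1 hσ hγ n
    rw [cML_succ hq0 hq1 hγ, Real.norm_of_nonneg (by positivity), Real.norm_of_nonneg (by positivity),
      abs_neg, abs_mul, abs_of_pos h4, pow_succ]
    have h5 : |cML γ σ q n| ≠ 0 := by positivity
    field_simp

theorem cML_NN {γ σ q : ℝ} (hq0 : 0 < q) (hq1 : q < 1) (hσ : 0 < σ) (hγ : 0 < γ) (hR : condR q γ) : NN (LD (mk (cML γ σ q))) := by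
  have hγ0 := hγ
  rcases hR with (h0 | h1) | ⟨_, _, h⟩
  · linarith
  · subst h1
    refine NN_LD_qsin (cML 1 σ q) (q ^ 2) (q ^ 3) (σ ^ 2 * (1 - q) ^ 2) (by positivity)
      (by nlinarith) (by positivity) (pow_lt_one₀ hq0.le hq1 (by norm_num))
      (by have : 0 < 1 - q := by linarith
          positivity) (cML_zero hq0 hq1 hγ) ?_
    intro n
    rw [cML_succ hq0 hq1 hγ]
    have a1 := (one_sub_pos hq0 hq1 hγ n 1 one_pos)
    have a2 := (one_sub_pos hq0 hq1 hγ n 2 two_pos)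
    unfold rML
    have e1 : q ^ (2 * (n:ℝ) + 1 + 1) = (q ^ 2) ^ (n + 1) := by
      rw [← pow_mul, ← Real.rpow_natCast]; congr 1; push_cast; ring
    have e2 : q ^ (2 * (n:ℝ) + 1 + 2) = q ^ 3 * (q ^ 2) ^ n := by
      rw [← pow_mul, ← pow_add, ← Real.rpow_natCast]; congr 1; push_cast; ring
    rw [e1] at a1 ⊢
    rw [e2] at a2 ⊢
    have := a1.ne'
    have := a2.ne'
    field_simp
    rw [pow_mul]; ring
  · have hq2 : q < 1 / 2 := by
      have a1 := (one_sub_pos hq0 hq1 hγ 0 1 one_pos)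
      have a2 := (one_sub_pos hq0 hq1 hγ 0 2 two_pos)
      simp only [Nat.cast_zero, mul_zero, zero_add] at a1 a2
      have b1 := Real.rpow_pos_of_pos hq0 (γ + 1)
      have b2 := Real.rpow_pos_of_pos hq0 (γ + 2)
      have hqi : 0 < q⁻¹ * (1 - q) := mul_pos (by positivity) (by linarith)
      have h3 : (1 - q ^ (γ + 1)) * (1 - q ^ (γ + 2)) ≤ 1 := by nlinarith
      have h4 : 1 < q⁻¹ * (1 - q) := by
        rw [mul_assoc] at h
        nlinarith
      rw [inv_mul_eq_div, lt_div_iff₀ hq0] at h4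
      linarith
    have key := NN_LD_hutch (fun n => (-1) ^ n * cML γ σ q n) (rML γ σ q)
      (by simp [cML_zero hq0 hq1 hγ]) (rML_pos hq0 hq1 hσ hγ) (fun n => by
        rw [cML_succ hq0 hq1 hγ, pow_succ]; ring) (fun n => by
        refine (rML_succ_le hq0 hq1 hσ hγ n).trans ?_
        have := rML_pos hq0 hq1 hσ hγ n
        have : q ^ 2 ≤ 1 / 4 := by nlinarith
        nlinarith)
    convert key using 3
    funext n
    rw [← mul_assoc, ← mul_pow]; simp

def qs (c : ℝ) (p : ℕ → ℝ) : ℕ → ℝ := fun n => (1 + c * n) * p n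

def dd (p : ℕ → ℝ) : ℕ → ℝ := fun n => (n + 1 : ℕ) * p (n + 1)

noncomputable def HC (c : ℝ) (p : ℕ → ℝ) (z : ℂ) : ℂ :=
  -(z * ev (dd (qs c p)) z / ev (qs c p) z) + (1 - c / 2) * (z * ev (dd p) z / ev p z)

noncomputable def HR (c : ℝ) (p : ℕ → ℝ) (x : ℝ) : ℝ :=
  -(x * evR (dd (qs c p)) x / evR (qs c p) x) + (1 - c / 2) * (x * evR (dd p) x / evR p x)

theorem HC_ofReal (c : ℝ) (p : ℕ → ℝ) (x : ℝ) : HC c p x = (HR c p x : ℂ) := by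
  unfold HC HR
  simp only [ev_ofReal]
  push_cast
  rfl

theorem evR_zero (p : ℕ → ℝ) : evR p 0 = p 0 := by
  unfold evR
  rw [tsum_eq_single 0]
  · simp
  · intro n hn; simp [hn]

theorem Ent.contR {p : ℕ → ℝ} (hp : Ent p) : Continuous (evR p) :=
  continuous_iff_continuousAt.2 fun x => (hp.hasDerivAtR x).continuousAt

theorem evR_pos {p : ℕ → ℝ} (hp : Ent p) (hp0 : p 0 = 1) {x : ℝ} (hx : 0 ≤ x)
    (h : ∀ y, 0 < y → y ≤ x → evR p y ≠ 0) : 0 < evR p x := by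
  by_contra hneg
  push Not at hneg
  have := intermediate_value_Icc' hx (hp.contR.continuousOn)
  obtain ⟨y, hy, hy0⟩ := this (show (0:ℝ) ∈ Set.Icc (evR p x) (evR p 0) from
    ⟨hneg, by rw [evR_zero, hp0]; norm_num⟩)
  rcases hy.1.eq_or_lt with h0 | h0
  · rw [← h0, evR_zero, hp0] at hy0; norm_num at hy0
  · exact h y h0 hy.2 hy0

theorem LD_hasSum {p : ℕ → ℝ} (hp : Ent p) (hp0 : p 0 = 1) {R : ℝ} (hR : 0 < R)
    (hne : ∀ z : ℂ, ‖z‖ < R → ev p z ≠ 0) (z : ℂ) (hz : ‖z‖ < R) :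
    HasSum (fun n => ((coeff n (LD (mk p)) : ℝ) : ℂ) * z ^ n) (-(z * ev (dd p) z / ev p z)) := by
  have hw : Ent (fun n => (-1) * (n * p n)) := hp.theta.smul (-1)
  have h0 : constantCoeff (mk p) ≠ 0 := by
    rw [← coeff_zero_eq_constantCoeff_apply, coeff_mk, hp0]; exact one_ne_zero
  have := hasSum_quot (u := LD (mk p)) hp hw (by rw [hp0]; exact one_ne_zero) (by
    rw [mul_LD h0]
    ext n
    rw [map_neg, coeff_X_mul_der, coeff_mk, coeff_mk]; ring) hR hne z hz
  convert this using 1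
  have e : z * ev (dd p) z = ev (fun n => n * p n) z := ev_theta p hp z
  rw [e, ← neg_div]
  congr 1
  rw [ev, ev, ← tsum_neg]
  refine tsum_congr fun n => ?_
  push_cast; ring

theorem H_facts {p : ℕ → ℝ} (hp : Ent p) (hp0 : p 0 = 1) (hN : NN (LD (mk p))) {c : ℝ} (hc0 : 0 < c)
    (_hc2 : c < 2) {η : ℝ} (hη : 0 < η) (hQ : ∀ x, 0 < x → x < η → evR (qs c p) x ≠ 0)
    (hQη : evR (qs c p) η = 0) (hP : ∀ x, 0 < x → x ≤ η → evR p x ≠ 0) :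
    (∀ z : ℂ, ‖z‖ < η → ev p z ≠ 0 ∧ ev (qs c p) z ≠ 0) ∧
    (∀ x, 0 ≤ x → x < η → 0 < evR p x ∧ 0 < evR (qs c p) x) ∧
    (StrictMonoOn (HR c p) (Set.Ico 0 η)) ∧
    (∀ v, 0 < v → ∃ t ∈ Set.Ioo 0 η, HR c p t = v) ∧
    (∀ z : ℂ, ‖z‖ < η → (HC c p z).re ≤ HR c p ‖z‖) := by
  have hq : Ent (qs c p) := hp.euler c
  have hq0 : qs c p 0 = 1 := by simp [qs, hp0]
  obtain ⟨D, hD, hLD⟩ := LD_euler (c := c) hp0 hN hc0.le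
  change LD (mk (qs c p)) = _ at hLD
  have hNq : NN (LD (mk (qs c p))) := by rw [hLD]; exact hN.add hD
  have nP := no_zeros hp hp0 hN (fun x h1 h2 => hP x h1 h2.le)
  have nQ := no_zeros hq hq0 hNq hQ
  have pP : ∀ x, 0 ≤ x → x ≤ η → 0 < evR p x := fun x h1 h2 =>
    evR_pos hp hp0 h1 fun y h3 h4 => hP y h3 (h4.trans h2)
  have pQ : ∀ x, 0 ≤ x → x < η → 0 < evR (qs c p) x := fun x h1 h2 =>
    evR_pos hq hq0 h1 fun y h3 h4 => hQ y h3 (h4.trans_lt h2)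
  have sP := LD_hasSum hp hp0 hη nP
  have sQ := LD_hasSum hq hq0 hη nQ
  set E : ℕ → ℝ := fun n => coeff n (LD (mk (qs c p))) - (1 - c / 2) * coeff n (LD (mk p)) with hE
  have E0 : ∀ n, 0 ≤ E n := by
    intro n
    have h1 := hN n
    have h2 := hD n
    simp only [hE, hLD, map_add]
    nlinarith
  have sE : ∀ z : ℂ, ‖z‖ < η → HasSum (fun n => (E n : ℂ) * z ^ n) (HC c p z) := by
    intro z hz
    have := (sQ z hz).sub ((sP z hz).mul_left (((1 - c / 2 : ℝ)) : ℂ))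
    have e1 : (fun n => (E n : ℂ) * z ^ n) = fun b =>
        ((coeff b (LD (mk (qs c p))) : ℝ) : ℂ) * z ^ b -
        ((1 - c / 2 : ℝ) : ℂ) * (((coeff b (LD (mk p)) : ℝ) : ℂ) * z ^ b) := by
      funext n; simp only [hE]; push_cast; ring
    have e2 : HC c p z = -(z * ev (dd (qs c p)) z / ev (qs c p) z) -
        ((1 - c / 2 : ℝ) : ℂ) * -(z * ev (dd p) z / ev p z) := by
      unfold HC; push_cast; ring
    rw [e1, e2]
    exact this
  have sER : ∀ x : ℝ, 0 ≤ x → x < η → HasSum (fun n => E n * x ^ n) (HR c p x) := by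
    intro x h1 h2
    have := sE x (by rw [Complex.norm_real, Real.norm_of_nonneg h1]; exact h2)
    rw [HC_ofReal] at this
    rw [← Complex.hasSum_ofReal]
    convert this using 1
    funext n; push_cast; rfl
  have mono : MonotoneOn (HR c p) (Set.Ico 0 η) := by
    intro x hx y hy hxy
    refine hasSum_le (fun n => ?_) (sER x hx.1 hx.2) (sER y hy.1 hy.2)
    exact mul_le_mul_of_nonneg_left (pow_le_pow_left₀ hx.1 hxy n) (E0 n)
  have hcont : ContinuousOn (HR c p) (Set.Ico 0 η) := by
    unfold HR
    have a1 : Continuous (evR (dd (qs c p))) := (hq.derivEnt).contR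
    have a2 : Continuous (evR (dd p)) := (hp.derivEnt).contR
    refine ContinuousOn.add (ContinuousOn.neg (ContinuousOn.div (by fun_prop) hq.contR.continuousOn
      fun x hx => (pQ x hx.1 hx.2).ne')) (ContinuousOn.mul (by fun_prop) (ContinuousOn.div (by fun_prop)
      hp.contR.continuousOn fun x hx => (pP x hx.1 hx.2.le).ne'))
  have unb : ∀ M : ℝ, ∃ x ∈ Set.Ioo 0 η, M < HR c p x := by
    intro M
    by_contra hcon
    push Not at hcon
    have a2 : Continuous (evR (dd p)) := (hp.derivEnt).contR
    have hb : ContinuousOn (fun x => (1 - c / 2) * (x * evR (dd p) x / evR p x)) (Set.Icc 0 η) :=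
      ContinuousOn.mul (by fun_prop) (ContinuousOn.div (by fun_prop)
      hp.contR.continuousOn fun x hx => (pP x hx.1 hx.2).ne')
    obtain ⟨B, hB⟩ := (isCompact_Icc.image_of_continuousOn hb).bddBelow
    have hB' : ∀ x ∈ Set.Icc 0 η, B ≤ (1 - c / 2) * (x * evR (dd p) x / evR p x) :=
      fun x hx => hB ⟨x, hx, rfl⟩
    have key : ∀ x ∈ Set.Ioo (η / 2) η, -((|M - B| / (η / 2)) * evR (qs c p) x) ≤ evR (dd (qs c p)) x := by
      intro x hx
      have hx0 : 0 < x := by linarith [hx.1]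
      have h1 := hcon x ⟨hx0, hx.2⟩
      have h2 := hB' x ⟨hx0.le, hx.2.le⟩
      have h3 := pQ x hx0.le hx.2
      unfold HR at h1
      have h4 : -(x * evR (dd (qs c p)) x / evR (qs c p) x) ≤ |M - B| := by
        have := le_abs_self (M - B)
        linarith
      rw [neg_le, le_div_iff₀ h3] at h4
      have hk : |M - B| ≤ |M - B| / (η / 2) * x := by
        rw [div_mul_eq_mul_div, le_div_iff₀ (by linarith)]
        exact mul_le_mul_of_nonneg_left hx.1.le (abs_nonneg _)
      have h5 : x * (-((|M - B| / (η / 2)) * evR (qs c p) x)) ≤ x * evR (dd (qs c p)) x := by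
        nlinarith
      exact le_of_mul_le_mul_left h5 hx0
    set K := |M - B| / (η / 2)
    have hder : ∀ x, HasDerivAt (fun x => evR (qs c p) x * Real.exp (K * x))
        (evR (dd (qs c p)) x * Real.exp (K * x) + evR (qs c p) x * (Real.exp (K * x) * (K * 1))) x := by
      intro x
      exact (hq.hasDerivAtR x).mul (((hasDerivAt_id x).const_mul K).exp)
    have hm : MonotoneOn (fun x => evR (qs c p) x * Real.exp (K * x)) (Set.Icc (η / 2) η) := by
      refine monotoneOn_of_deriv_nonneg (convex_Icc _ _)
        (fun x _ => (hder x).continuousAt.continuousWithinAt)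
        (fun x _ => (hder x).differentiableAt.differentiableWithinAt) ?_
      intro x hx
      rw [interior_Icc] at hx
      rw [(hder x).deriv]
      have := key x hx
      have he := Real.exp_pos (K * x)
      nlinarith
    have h1 := hm (show η / 2 ∈ Set.Icc (η / 2) η from ⟨le_rfl, by linarith⟩)
      (show η ∈ Set.Icc (η / 2) η from ⟨by linarith, le_rfl⟩) (by linarith)
    simp only [hQη, zero_mul] at h1
    have := pQ (η / 2) (by linarith) (by linarith)
    have := mul_pos this (Real.exp_pos (K * (η / 2)))
    linarith
  have H0 : HR c p 0 = 0 := by simp [HR]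
  have hE00 : E 0 = 0 := by
    have := (sER 0 le_rfl hη).unique (hasSum_single 0 fun n hn => by simp [hn])
    rw [H0] at this
    simpa using this.symm
  obtain ⟨m, hm, hm0⟩ : ∃ m, 0 < E m ∧ m ≠ 0 := by
    by_contra hcon
    push Not at hcon
    have hz : ∀ n, E n = 0 := by
      intro n
      by_contra hn
      have := hcon n (lt_of_le_of_ne (E0 n) (Ne.symm hn))
      rw [this] at hn
      exact hn hE00
    obtain ⟨x, hx, hlt⟩ := unb 0
    have h0 : HasSum (fun n => E n * x ^ n) 0 := by simp [hz, hasSum_zero]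
    have := (sER x hx.1.le hx.2).unique h0
    linarith
  refine ⟨fun z hz => ⟨nP z hz, nQ z hz⟩, fun x h1 h2 => ⟨pP x h1 h2.le, pQ x h1 h2⟩, ?_, ?_, ?_⟩
  · intro x hx y hy hxy
    refine hasSum_lt (i := m) (fun n => ?_) ?_ (sER x hx.1 hx.2) (sER y hy.1 hy.2)
    · exact mul_le_mul_of_nonneg_left (pow_le_pow_left₀ hx.1 hxy.le n) (E0 n)
    · exact mul_lt_mul_of_pos_left (pow_lt_pow_left₀ hxy hx.1 hm0) hm
  · intro v hv
    obtain ⟨x, hx, hlt⟩ := unb v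
    have := intermediate_value_Icc hx.1.le (hcont.mono (fun y hy => ⟨hy.1, hy.2.trans_lt hx.2⟩))
    obtain ⟨t, ht, htv⟩ := this (show v ∈ Set.Icc _ _ from ⟨by rw [H0]; exact hv.le, hlt.le⟩)
    refine ⟨t, ⟨lt_of_le_of_ne ht.1 ?_, ht.2.trans_lt hx.2⟩, htv⟩
    rintro rfl
    rw [H0] at htv; linarith
  · intro z hz
    have h1 := Complex.hasSum_re (sE z hz)
    refine hasSum_le (fun n => ?_) h1 (sER ‖z‖ (norm_nonneg z) hz)
    refine (Complex.re_le_norm _).trans ?_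
    rw [norm_mul, norm_pow, Complex.norm_real, Real.norm_of_nonneg (E0 n)]

theorem gen_convex {𝕜 : Type*} [RCLike 𝕜] {P P' Q Q' f : 𝕜 → 𝕜} {c z0 : 𝕜}
    (hP : ∀ t, HasDerivAt P (P' t) t) (hQ : ∀ t, HasDerivAt Q (Q' t) t)
    (hPQ : ∀ t, Q t = P t + c * (t * P' t)) (hz0 : z0 ≠ 0) (hP0 : P (z0 ^ 2) ≠ 0)
    (hQ0 : Q (z0 ^ 2) ≠ 0) (hf0 : f z0 ≠ 0)
    (hf : ∀ᶠ z in nhds z0, HasDerivAt f (f z * (Q (z ^ 2) / (z * P (z ^ 2)))) z) :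
    1 + z0 * deriv (deriv f) z0 / deriv f z0 =
      1 - 2 * (-(z0 ^ 2 * Q' (z0 ^ 2) / Q (z0 ^ 2)) +
        (1 - c / 2) * (z0 ^ 2 * P' (z0 ^ 2) / P (z0 ^ 2))) := by
  have h1 : deriv f =ᶠ[nhds z0] fun z => f z * (Q (z ^ 2) / (z * P (z ^ 2))) := by
    filter_upwards [hf] with z hz using hz.deriv
  have h2 := hf.self_of_nhds
  have hsq : HasDerivAt (fun z : 𝕜 => z ^ 2) (2 * z0) z0 := by
    simpa using hasDerivAt_pow 2 z0
  have hPc : HasDerivAt (fun z => P (z ^ 2)) (P' (z0 ^ 2) * (2 * z0)) z0 :=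
    HasDerivAt.comp z0 (hP (z0 ^ 2)) hsq
  have hQc : HasDerivAt (fun z => Q (z ^ 2)) (Q' (z0 ^ 2) * (2 * z0)) z0 :=
    HasDerivAt.comp z0 (hQ (z0 ^ 2)) hsq
  have h3 := h2.fun_mul (hQc.fun_div ((hasDerivAt_id' z0).fun_mul hPc) (mul_ne_zero hz0 hP0))
  rw [h1.deriv_eq, h3.deriv, h2.deriv]
  have e := hPQ (z0 ^ 2)
  have h20 : (2 : 𝕜) ≠ 0 := two_ne_zero
  generalize f z0 = F at *
  generalize Q' (z0 ^ 2) = Q1 at *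
  generalize P' (z0 ^ 2) = P1 at *
  generalize Q (z0 ^ 2) = Q0 at *
  generalize P (z0 ^ 2) = P0 at *
  field_simp
  have e' : c * (z0 ^ 2 * P1) = Q0 - P0 := by rw [e]; ring
  linear_combination (-Q0) * e'

theorem evR_euler {p : ℕ → ℝ} (hp : Ent p) (c x : ℝ) :
    evR (qs c p) x = evR p x + c * (x * evR (dd p) x) := by
  have := ev_euler p hp c (x : ℂ)
  change ev (qs c p) x = ev p x + c * (x * ev (dd p) x) at this
  simp only [ev_ofReal] at this
  exact_mod_cast this

theorem W_R {p : ℕ → ℝ} (hp : Ent p) {γ : ℝ} (hγ : 0 < γ) {x : ℝ} (hx : 0 < x) :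
    HasDerivAt (fun x => x ^ (γ + 1) * evR p (x ^ 2))
      ((γ + 1) * x ^ γ * evR (qs (2 / (γ + 1)) p) (x ^ 2)) x := by
  have hsq : HasDerivAt (fun z : ℝ => z ^ 2) (2 * x) x := by
    simpa using hasDerivAt_pow 2 x
  have hPc : HasDerivAt (fun z => evR p (z ^ 2)) (evR (dd p) (x ^ 2) * (2 * x)) x :=
    HasDerivAt.comp (h := fun z : ℝ => z ^ 2) (h₂ := evR p) x (hp.hasDerivAtR (x ^ 2)) hsq
  have h := (Real.hasDerivAt_rpow_const (p := γ + 1) (Or.inl hx.ne')).mul hPc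
  refine HasDerivAt.congr_deriv h (Eq.symm ?_)
  rw [evR_euler hp, Real.rpow_add hx, Real.rpow_one, add_sub_cancel_right]
  have : γ + 1 ≠ 0 := by linarith
  field_simp

theorem f_R {p : ℕ → ℝ} (hp : Ent p) {γ : ℝ} (hγ : 0 < γ) {x : ℝ} (hx : 0 < x)
    (hpos : 0 < evR p (x ^ 2)) :
    HasDerivAt (fun x => (x ^ (γ + 1) * evR p (x ^ 2)) ^ (1 / (γ + 1)))
      ((x ^ (γ + 1) * evR p (x ^ 2)) ^ (1 / (γ + 1)) *
        (evR (qs (2 / (γ + 1)) p) (x ^ 2) / (x * evR p (x ^ 2)))) x := by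
  have hx1 : 0 < x ^ (γ + 1) := Real.rpow_pos_of_pos hx _
  have hw : 0 < x ^ (γ + 1) * evR p (x ^ 2) := mul_pos hx1 hpos
  have h := (W_R hp hγ hx).rpow_const (p := 1 / (γ + 1)) (Or.inl hw.ne')
  refine HasDerivAt.congr_deriv h (Eq.symm ?_)
  rw [Real.rpow_sub hw, Real.rpow_one]
  generalize (x ^ (γ + 1) * evR p (x ^ 2)) ^ (1 / (γ + 1)) = A
  rw [Real.rpow_add hx, Real.rpow_one]
  have : γ + 1 ≠ 0 := by linarith
  have := (Real.rpow_pos_of_pos hx γ).ne'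
  field_simp

theorem f_C {p : ℕ → ℝ} (hp : Ent p) {γ : ℝ} (hγ : 0 < γ) {z0 : ℂ} (hz0 : z0 ≠ 0)
    (hP0 : ev p (z0 ^ 2) ≠ 0) {f : ℂ → ℂ}
    (hf : ∀ z, f z = Complex.exp ((1 / ((γ : ℂ) + 1)) *
      Complex.log (z ^ ((γ : ℂ) + 1) * ev p (z ^ 2))))
    (hd : ∀ᶠ z in nhds z0, DifferentiableAt ℂ f z) :
    ∀ᶠ z in nhds z0, HasDerivAt f
      (f z * (ev (qs (2 / (γ + 1)) p) (z ^ 2) / (z * ev p (z ^ 2)))) z := by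
  have hγ1 : (γ : ℂ) + 1 ≠ 0 := by
    have : γ + 1 ≠ 0 := by linarith
    exact_mod_cast this
  have hPd : ∀ z, HasDerivAt (fun z : ℂ => ev p (z ^ 2)) (ev (dd p) (z ^ 2) * (2 * z)) z := by
    intro z
    have hsq : HasDerivAt (fun z : ℂ => z ^ 2) (2 * z) z := by
      simpa using hasDerivAt_pow 2 z
    exact HasDerivAt.comp z (hp.hasDerivAt (z ^ 2)) hsq
  have hPcont : Continuous fun z : ℂ => ev p (z ^ 2) :=
    continuous_iff_continuousAt.2 fun z => (hPd z).continuousAt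
  set F : ℂ → ℂ := fun z => z * Complex.exp ((1 / ((γ : ℂ) + 1)) *
    Complex.log (ev p (z ^ 2) / ev p (z0 ^ 2))) with hF
  have e1 : ∀ᶠ z in nhds z0, z ≠ 0 := isOpen_ne.mem_nhds hz0
  have e2 : ∀ᶠ z in nhds z0, ev p (z ^ 2) ≠ 0 := hPcont.continuousAt.eventually_ne hP0
  have e3 : ∀ᶠ z in nhds z0, ev p (z ^ 2) / ev p (z0 ^ 2) ∈ Complex.slitPlane := by
    have hc : ContinuousAt (fun z : ℂ => ev p (z ^ 2) / ev p (z0 ^ 2)) z0 :=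
      (hPcont.div_const _).continuousAt
    refine hc.eventually_mem (Complex.isOpen_slitPlane.mem_nhds ?_)
    rw [div_self hP0]; exact Complex.one_mem_slitPlane
  have hFd : ∀ᶠ z in nhds z0, HasDerivAt F
      (F z * (ev (qs (2 / (γ + 1)) p) (z ^ 2) / (z * ev p (z ^ 2)))) z := by
    filter_upwards [e1, e2, e3] with z h1 h2 h3
    have h := (hasDerivAt_id' z).fun_mul
      (((((hPd z).div_const (ev p (z0 ^ 2))).clog h3).const_mul (1 / ((γ : ℂ) + 1))).cexp)
    refine HasDerivAt.congr_deriv h (Eq.symm ?_)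
    have he : ev (qs (2 / (γ + 1)) p) (z ^ 2) =
      ev p (z ^ 2) + ((2 / (γ + 1) : ℝ) : ℂ) * (z ^ 2 * ev (dd p) (z ^ 2)) := ev_euler p hp _ _
    rw [he]
    simp only [hF]
    generalize Complex.exp _ = A
    push_cast
    field_simp
  have hF0 : ∀ z, z ≠ 0 → F z ≠ 0 := fun z hz => mul_ne_zero hz (Complex.exp_ne_zero _)
  have hnorm : ∀ᶠ z in nhds z0, ‖f z / F z‖ =
      Real.exp ((1 / (γ + 1)) * Real.log ‖ev p (z0 ^ 2)‖) := by
    filter_upwards [e1, e2] with z h1 h2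
    have cs : (1 / ((γ : ℂ) + 1)) = ((1 / (γ + 1) : ℝ) : ℂ) := by push_cast; rfl
    have cs2 : ((γ : ℂ) + 1) = ((γ + 1 : ℝ) : ℂ) := by push_cast; rfl
    have hz : 0 < ‖z‖ := norm_pos_iff.2 h1
    have n1 : ‖ev p (z ^ 2)‖ ≠ 0 := norm_ne_zero_iff.2 h2
    have n2 : ‖ev p (z0 ^ 2)‖ ≠ 0 := norm_ne_zero_iff.2 hP0
    rw [norm_div, hf, hF, norm_mul, Complex.norm_exp, Complex.norm_exp, cs, Complex.re_ofReal_mul,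
      Complex.re_ofReal_mul, Complex.log_re, Complex.log_re, norm_mul, norm_div, cs2,
      Complex.norm_cpow_real, Real.log_mul (Real.rpow_pos_of_pos hz _).ne' n1, Real.log_div n1 n2,
      Real.log_rpow hz]
    have hg : γ + 1 ≠ 0 := by linarith
    have : 1 / (γ + 1) * ((γ + 1) * Real.log ‖z‖ + Real.log ‖ev p (z ^ 2)‖) =
      Real.log ‖z‖ + (1 / (γ + 1) * (Real.log ‖ev p (z ^ 2)‖ - Real.log ‖ev p (z0 ^ 2)‖)
        + 1 / (γ + 1) * Real.log ‖ev p (z0 ^ 2)‖) := by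
      field_simp; ring
    rw [this, Real.exp_add, Real.exp_log hz, Real.exp_add]
    have := Real.exp_pos (1 / (γ + 1) * (Real.log ‖ev p (z ^ 2)‖ - Real.log ‖ev p (z0 ^ 2)‖))
    field_simp
  have hconst := Complex.eventually_eq_of_isLocalMax_norm (f := fun z => f z / F z) (c := z0) (by
    filter_upwards [e1, hFd, hd] with z h1 h2 h3
    exact h3.div h2.differentiableAt (hF0 z h1)) (by
    filter_upwards [hnorm] with z hz
    simp only [Function.comp]
    rw [hz, hnorm.self_of_nhds])
  have hfe : ∀ᶠ z in nhds z0, f z = (f z0 / F z0) * F z := by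
    filter_upwards [hconst, e1] with z h1 h2
    rw [← h1, div_mul_cancel₀ _ (hF0 z h2)]
  filter_upwards [hfe.eventually_nhds, hFd] with z h1 h2
  have h3 := (h2.const_mul (f z0 / F z0)).congr_of_eventuallyEq h1
  refine HasDerivAt.congr_deriv h3 (Eq.symm ?_)
  rw [h1.self_of_nhds]; ring

theorem qMLR_link (γ σ q x : ℝ) : qGamma q (γ + 1) * qMLR γ σ q x = evR (cML γ σ q) (x ^ 2) := by
  unfold qMLR evR cML
  rw [← tsum_mul_left]
  refine tsum_congr fun n => ?_
  rw [pow_mul x]; ring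

theorem qML_link (γ σ q : ℝ) (z : ℂ) :
    (qGamma q (γ + 1) : ℂ) * qML γ σ q z = ev (cML γ σ q) (z ^ 2) := by
  unfold qML ev cML
  rw [← tsum_mul_left]
  refine tsum_congr fun n => ?_
  rw [pow_mul z, Complex.ofReal_mul (qGamma q (γ + 1))]; ring

theorem main_real {q σ γ : ℝ} (hq0 : 0 < q) (hq1 : q < 1) (hσ : 0 < σ)
    (hγ : 0 < γ) {ξ1 : ℝ}
    (hξ1 : IsLeast {x : ℝ | 0 < x ∧
      deriv (fun t : ℝ => t ^ (γ + 1) * qMLR γ σ q t) x = 0} ξ1) :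
    0 < ξ1 ∧ (∀ x, 0 < x → x < ξ1 ^ 2 → evR (qs (2 / (γ + 1)) (cML γ σ q)) x ≠ 0) ∧
    evR (qs (2 / (γ + 1)) (cML γ σ q)) (ξ1 ^ 2) = 0 ∧
    (∀ x, 0 < x → x ≤ ξ1 ^ 2 → evR (cML γ σ q) x ≠ 0) := by
  have hp : Ent (cML γ σ q) := cML_ent hq0 hq1 hσ hγ
  have hG : 0 < qGamma q (γ + 1) := qGamma_pos hq0 hq1 (by linarith)
  obtain ⟨⟨hξ, hd⟩, hmin⟩ := hξ1
  have hfun : (fun t : ℝ => t ^ (γ + 1) * qMLR γ σ q t) =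
      fun t => (qGamma q (γ + 1))⁻¹ * (t ^ (γ + 1) * evR (cML γ σ q) (t ^ 2)) := by
    funext t
    rw [← qMLR_link]
    field_simp
  rw [hfun] at hd
  have hder : ∀ x, 0 < x → deriv (fun t => (qGamma q (γ + 1))⁻¹ * (t ^ (γ + 1) * evR (cML γ σ q) (t ^ 2))) x
      = (qGamma q (γ + 1))⁻¹ * ((γ + 1) * x ^ γ * evR (qs (2 / (γ + 1)) (cML γ σ q)) (x ^ 2)) :=
    fun x hx => ((W_R hp hγ hx).const_mul _).deriv
  have hiff : ∀ x, 0 < x → (deriv (fun t => (qGamma q (γ + 1))⁻¹ * (t ^ (γ + 1) * evR (cML γ σ q) (t ^ 2))) x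
      = 0 ↔ evR (qs (2 / (γ + 1)) (cML γ σ q)) (x ^ 2) = 0) := by
    intro x hx
    rw [hder x hx]
    have h1 : (qGamma q (γ + 1))⁻¹ ≠ 0 := by positivity
    have h2 : γ + 1 ≠ 0 := by positivity
    have h3 := (Real.rpow_pos_of_pos hx γ).ne'
    simp [h2, h3, hG.ne']
  refine ⟨hξ, ?_, (hiff ξ1 hξ).1 hd, ?_⟩
  · intro x hx hxl h0
    have hs := Real.sqrt_pos.2 hx
    have hsq := Real.sq_sqrt hx.le
    have : ξ1 ≤ √x := hmin ⟨hs, by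
      rw [hfun]
      exact (hiff _ hs).2 (by rw [hsq]; exact h0)⟩
    nlinarith
  · intro x hx hxl h0
    have hs := Real.sqrt_pos.2 hx
    have hsq := Real.sq_sqrt hx.le
    have hcont : Continuous fun t : ℝ => (qGamma q (γ + 1))⁻¹ * (t ^ (γ + 1) * evR (cML γ σ q) (t ^ 2)) := by
      have h1 : Continuous fun t : ℝ => t ^ (γ + 1) := Real.continuous_rpow_const (by linarith)
      have h2 := hp.contR
      fun_prop
    obtain ⟨y, hy, hy0⟩ := exists_deriv_eq_zero hs hcont.continuousOn (by
      rw [hsq, h0, Real.zero_rpow (by linarith)]; simp)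
    have : ξ1 ≤ y := hmin ⟨hy.1, by rw [hfun]; exact hy0⟩
    have h3 := hy.2
    nlinarith [hy.1]

end

theorem stmt13 (q σ γ : ℝ) (hq0 : 0 < q) (hq1 : q < 1) (hσ : 0 < σ)
    (hγ : γ ∈ Set.Ioo (0 : ℝ) 2) (hR : condR q γ)
    (α : ℝ) (hα0 : 0 ≤ α) (hα1 : α < 1)
    (ξ1 : ℝ)
    (hξ1 : IsLeast {x : ℝ | 0 < x ∧
      deriv (fun t : ℝ => t ^ (γ + 1) * qMLR γ σ q t) x = 0} ξ1) :
    ∃ r₁ : ℝ,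
      (r₁ ∈ Set.Ioo 0 ξ1 ∧
        1 + r₁ * deriv (deriv (fMLR γ σ q)) r₁ / deriv (fMLR γ σ q) r₁ = α) ∧
      (∀ r : ℝ, r ∈ Set.Ioo 0 ξ1 →
        1 + r * deriv (deriv (fMLR γ σ q)) r / deriv (fMLR γ σ q) r = α → r = r₁) ∧
      radiusConvex α (fML γ σ q) = r₁ := by
  have hγ0 := hγ.1
  obtain ⟨hξ, hQ, hQη, hP⟩ := main_real hq0 hq1 hσ hγ0 hξ1
  have hp : Ent (cML γ σ q) := cML_ent hq0 hq1 hσ hγ0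
  have hp0 : cML γ σ q 0 = 1 := cML_zero hq0 hq1 hγ0
  have hN := cML_NN hq0 hq1 hσ hγ0 hR
  have hG : 0 < qGamma q (γ + 1) := qGamma_pos hq0 hq1 (by linarith)
  set p := cML γ σ q with hpdef
  set c : ℝ := 2 / (γ + 1) with hc
  have hc0 : 0 < c := by positivity
  have hc2 : c < 2 := by rw [hc, div_lt_iff₀ (by linarith)]; linarith
  have hη : 0 < ξ1 ^ 2 := by positivity
  have hq : Ent (qs c p) := hp.euler c
  obtain ⟨nz, pz, smono, surj, hre⟩ := H_facts hp hp0 hN hc0 hc2 hη hQ hQη hP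
  have sqm : ∀ r ∈ Set.Ioo 0 ξ1, r ^ 2 ∈ Set.Ico 0 (ξ1 ^ 2) := fun r hr =>
    ⟨by positivity, pow_lt_pow_left₀ hr.2 hr.1.le two_ne_zero⟩
  -- real part
  have hreal : ∀ r ∈ Set.Ioo 0 ξ1, 1 + r * deriv (deriv (fMLR γ σ q)) r / deriv (fMLR γ σ q) r
      = 1 - 2 * HR c p (r ^ 2) := by
    intro r hr
    have hfun : fMLR γ σ q = fun x => (x ^ (γ + 1) * evR p (x ^ 2)) ^ (1 / (γ + 1)) := by
      funext x
      unfold fMLR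
      rw [mul_assoc, qMLR_link]
    have hb := sqm r hr
    have hpos := pz (r ^ 2) hb.1 hb.2
    have hw : 0 < r ^ (γ + 1) * evR p (r ^ 2) := mul_pos (Real.rpow_pos_of_pos hr.1 _) hpos.1
    have := gen_convex (𝕜 := ℝ) (P := evR p) (P' := evR (dd p)) (Q := evR (qs c p))
      (Q' := evR (dd (qs c p))) (f := fMLR γ σ q) (c := c) (z0 := r) hp.hasDerivAtR hq.hasDerivAtR
      (evR_euler hp c) hr.1.ne' hpos.1.ne' hpos.2.ne'
      (by rw [hfun]; exact (Real.rpow_pos_of_pos hw _).ne') (by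
        filter_upwards [isOpen_Ioo.mem_nhds hr] with x hx
        rw [hfun]
        exact f_R hp hγ0 hx.1 (pz _ (sqm x hx).1 (sqm x hx).2).1)
    exact this
  -- complex part
  have hfC : ∀ z, fML γ σ q z = Complex.exp ((1 / ((γ : ℂ) + 1)) *
      Complex.log (z ^ ((γ : ℂ) + 1) * ev p (z ^ 2))) := by
    intro z
    unfold fML
    rw [mul_assoc (z ^ ((γ : ℂ) + 1)), qML_link]
  have nsq : ∀ z : ℂ, ‖z‖ < ξ1 → ‖z ^ 2‖ < ξ1 ^ 2 := fun z hz => by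
    rw [norm_pow]; exact pow_lt_pow_left₀ hz (norm_nonneg _) two_ne_zero
  have hcomp : ∀ z0 : ℂ, z0 ≠ 0 → ‖z0‖ < ξ1 →
      (∀ᶠ z in nhds z0, DifferentiableAt ℂ (fML γ σ q) z) →
      1 + z0 * deriv (deriv (fML γ σ q)) z0 / deriv (fML γ σ q) z0 = 1 - 2 * HC c p (z0 ^ 2) := by
    intro z0 h0 hlt hd
    have hnz := nz _ (nsq z0 hlt)
    exact gen_convex (𝕜 := ℂ) (P := ev p) (P' := ev (dd p)) (Q := ev (qs c p))
      (Q' := ev (dd (qs c p))) (f := fML γ σ q) (c := (c : ℂ)) (z0 := z0) hp.hasDerivAt hq.hasDerivAt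
      (ev_euler p hp c) h0 hnz.1 hnz.2 (by rw [hfC]; exact Complex.exp_ne_zero _)
      (f_C hp hγ0 h0 hnz.1 hfC hd)
  obtain ⟨t, ht, htv⟩ := surj ((1 - α) / 2) (by linarith)
  have hs := Real.sqrt_pos.2 ht.1
  have hsq := Real.sq_sqrt ht.1.le
  have hsl : √t < ξ1 := by
    by_contra hcon
    push Not at hcon
    have := ht.2
    nlinarith
  set r₁ := √t with hr1
  have hr1m : r₁ ∈ Set.Ioo 0 ξ1 := ⟨hs, hsl⟩
  refine ⟨r₁, ⟨hr1m, ?_⟩, ?_, ?_⟩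
  · rw [hreal r₁ hr1m, hsq, htv]; ring
  · intro r hr he
    rw [hreal r hr] at he
    have h1 : HR c p (r ^ 2) = HR c p (r₁ ^ 2) := by rw [hsq, htv]; linarith
    have h2 := smono.injOn (sqm r hr) (sqm r₁ hr1m) h1
    exact (pow_left_inj₀ hr.1.le hs.le two_ne_zero).1 h2
  · unfold radiusConvex
    refine IsGreatest.csSup_eq ⟨⟨hs, ?_⟩, ?_⟩
    · intro z hz
      by_cases hcase : z = 0 ∨ deriv (fML γ σ q) z = 0 ∨ deriv (deriv (fML γ σ q)) z = 0
      · have : z * deriv (deriv (fML γ σ q)) z / deriv (fML γ σ q) z = 0 := by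
          rcases hcase with h | h | h <;> simp [h]
        rw [this]; simpa using hα1
      · push Not at hcase
        obtain ⟨h0, h1, h2⟩ := hcase
        have hd1 : DifferentiableAt ℂ (deriv (fML γ σ q)) z := by
          by_contra hn
          exact h2 (deriv_zero_of_not_differentiableAt hn)
        have hd : ∀ᶠ w in nhds z, DifferentiableAt ℂ (fML γ σ q) w := by
          filter_upwards [hd1.continuousAt.eventually_ne h1] with w hw
          by_contra hn
          exact hw (deriv_zero_of_not_differentiableAt hn)
        have hzl := hz.trans hsl
        rw [hcomp z h0 hzl hd]
        have h3 := hre (z ^ 2) (nsq z hzl)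
        rw [norm_pow] at h3
        have hz0 : 0 < ‖z‖ := norm_pos_iff.2 h0
        have h4 := smono (sqm ‖z‖ ⟨hz0, hzl⟩) (sqm r₁ hr1m)
          (pow_lt_pow_left₀ hz hz0.le two_ne_zero)
        rw [hsq, htv] at h4
        have : (1 - 2 * HC c p (z ^ 2)).re = 1 - 2 * (HC c p (z ^ 2)).re := by simp
        rw [this]
        linarith
    · rintro r ⟨hr0, hr⟩
      by_contra hcon
      push Not at hcon
      have hn : ‖(r₁ : ℂ)‖ = r₁ := by rw [Complex.norm_real, Real.norm_of_nonneg hs.le]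
      have h1 := hr (r₁ : ℂ) (by rw [hn]; exact hcon)
      have hev : ∀ z, HasDerivAt (fun z : ℂ => ev p (z ^ 2)) (ev (dd p) (z ^ 2) * (2 * z)) z := by
        intro z
        have hsq : HasDerivAt (fun z : ℂ => z ^ 2) (2 * z) z := by
          simpa using hasDerivAt_pow 2 z
        exact HasDerivAt.comp z (hp.hasDerivAt (z ^ 2)) hsq
      have hr1s : (r₁ : ℂ) ∈ Complex.slitPlane := Complex.ofReal_mem_slitPlane.2 hs
      have hpow : ∀ z ∈ Complex.slitPlane,
          DifferentiableAt ℂ (fun z : ℂ => z ^ ((γ : ℂ) + 1) * ev p (z ^ 2)) z := fun z hz =>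
        (DifferentiableAt.cpow_const differentiableAt_id hz).mul (hev z).differentiableAt
      have hw0 : (r₁ : ℂ) ^ ((γ : ℂ) + 1) * ev p ((r₁ : ℂ) ^ 2) ∈ Complex.slitPlane := by
        have e : (r₁ : ℂ) ^ ((γ : ℂ) + 1) * ev p ((r₁ : ℂ) ^ 2) =
            ((r₁ ^ (γ + 1) * evR p (r₁ ^ 2) : ℝ) : ℂ) := by
          rw [← Complex.ofReal_pow, ev_ofReal, Complex.ofReal_mul, Complex.ofReal_cpow hs.le]
          push_cast; rfl
        rw [e, Complex.ofReal_mem_slitPlane]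
        exact mul_pos (Real.rpow_pos_of_pos hs _) (pz _ (sqm r₁ hr1m).1 (sqm r₁ hr1m).2).1
      have hd : ∀ᶠ w in nhds (r₁ : ℂ), DifferentiableAt ℂ (fML γ σ q) w := by
        filter_upwards [Complex.isOpen_slitPlane.mem_nhds hr1s,
          (hpow _ hr1s).continuousAt.eventually_mem (Complex.isOpen_slitPlane.mem_nhds hw0)] with w h2 h3
        rw [show fML γ σ q = _ from funext hfC]
        exact (((hpow w h2).clog h3).const_mul _).cexp
      rw [hcomp _ (by exact_mod_cast hs.ne') (by rw [hn]; exact hsl) hd, ← Complex.ofReal_pow,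
        HC_ofReal, hsq, htv] at h1
      have : (1 - 2 * (((1 - α) / 2 : ℝ) : ℂ)).re = α := by
        have : (1 - 2 * (((1 - α) / 2 : ℝ) : ℂ)) = ((α : ℝ) : ℂ) := by push_cast; ring
        rw [this, Complex.ofReal_re]
      rw [this] at h1
      exact lt_irrefl _ h1
end

section
/- Assume condition (R) and let α∈[0,1). Let θ_{γ,σ,1}(q) be the smallest positive zero of g_{γ,σ}'(·;q). Then the equation 1 + r·g_{γ,σ}''(r;q)/g_{γ,σ}'(r;q) = α has a unique root r₂ in the interval (0, θ_{γ,σ,1}(q)), and the radius of convexity of order α of g_{γ,σ}(·;q) equals r₂. -/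
/-- Real restriction of the normalized function $g_{γ,σ}$. -/
noncomputable def gMLR (γ σ q : ℝ) (x : ℝ) : ℝ :=
  x * qGamma q (γ + 1) * qMLR γ σ q x



namespace QML
open Polynomial Filter Topology Finset

/-- the polynomial `∏ (1 - u_i X)` -/
noncomputable def pU {K : Type*} [Field K] (N : ℕ) (u : ℕ → K) : K[X] :=
  ∏ i ∈ range N, (1 - C (u i) * X)

lemma pU_succ {K : Type*} [Field K] (N : ℕ) (u : ℕ → K) :
    pU (N+1) u = pU N u * (1 - C (u N) * X) := by
  simp [pU, prod_range_succ]

lemma pU_eval {K : Type*} [Field K] (N : ℕ) (u : ℕ → K) (w : K) :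
    (pU N u).eval w = ∏ i ∈ range N, (1 - u i * w) := by
  simp [pU, eval_prod]

lemma pU_coeff_zero {K : Type*} [Field K] (N : ℕ) (u : ℕ → K) :
    (pU N u).coeff 0 = 1 := by
  rw [coeff_zero_eq_eval_zero, pU_eval]; simp

lemma pU_natDegree {K : Type*} [Field K] (N : ℕ) (u : ℕ → K) :
    (pU N u).natDegree ≤ N := by
  induction N with
  | zero => simp [pU]
  | succ n ih =>
    rw [pU_succ]
    refine natDegree_mul_le.trans ?_
    have : (1 - C (u n) * X : K[X]).natDegree ≤ 1 := by compute_degree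
    omega

lemma pU_deriv {K : Type*} [Field K] (N : ℕ) (u : ℕ → K) (w : K)
    (h : ∀ j < N, 1 - u j * w ≠ 0) :
    (derivative (pU N u)).eval w =
      -(∑ j ∈ range N, u j / (1 - u j * w)) * (pU N u).eval w := by
  induction N with
  | zero => simp [pU]
  | succ n ih =>
    have ih := ih (fun j hj => h j (by omega))
    have h1 := h n (by omega)
    rw [pU_succ, derivative_mul, eval_add, eval_mul, eval_mul, ih, sum_range_succ, eval_mul]
    generalize ∑ j ∈ range n, u j / (1 - u j * w) = S
    simp
    field_simp
    ring

lemma eq_pU (P : ℝ[X]) (N : ℕ) (h0 : P.coeff 0 = 1) (hd : P.natDegree ≤ N) (y : ℕ → ℝ)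
    (hy : ∀ j < N, 0 < y j) (hm : ∀ i j, i < j → j < N → y i < y j)
    (hr : ∀ j < N, P.eval (y j) = 0) : P = pU N (fun j => (y j)⁻¹) := by
  classical
  let s : Finset ℝ := insert 0 ((range N).image y)
  have hc : s.card = N + 1 := by
    rw [card_insert_of_notMem, card_image_of_injOn, card_range]
    · intro i hi j hj hij
      simp at hi hj
      rcases lt_trichotomy i j with h | h | h
      · exact absurd hij (hm i j h hj).ne
      · exact h
      · exact absurd hij (hm j i h hi).ne'
    · simp only [mem_image, mem_range, not_exists, not_and]
      intro j hj h
      exact (hy j hj).ne' h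
  refine eq_of_natDegree_lt_card_of_eval_eq' P _ s ?_ ?_
  · intro x hx
    simp only [s, mem_insert, mem_image, mem_range] at hx
    rcases hx with rfl | ⟨j, hj, rfl⟩
    · rw [← coeff_zero_eq_eval_zero, ← coeff_zero_eq_eval_zero, h0, pU_coeff_zero]
    · rw [hr j hj, pU_eval, eq_comm]
      apply prod_eq_zero (mem_range.2 hj)
      have := (hy j hj).ne'
      field_simp
      simp
  · rw [hc]
    have := pU_natDegree N (fun j => (y j)⁻¹)
    exact Nat.lt_succ_of_le (max_le hd this)

lemma sign_lemma (N j : ℕ) (hj : j ≤ N) (x : ℕ → ℝ) (hx : ∀ i, 0 < x i) (w : ℝ)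
    (h1 : ∀ i < j, x i ≤ w) (h2 : ∀ i, j ≤ i → w ≤ x i) :
    0 ≤ (-1)^j * (pU N (fun i => (x i)⁻¹)).eval w := by
  rw [pU_eval, ← prod_range_mul_prod_Ico _ hj, ← mul_assoc]
  have e : (-1:ℝ)^j * ∏ k ∈ range j, (1 - (x k)⁻¹ * w) = ∏ k ∈ range j, ((x k)⁻¹ * w - 1) := by
    have := prod_neg (s := range j) (fun k => 1 - (x k)⁻¹ * w)
    simp only [card_range] at this
    rw [← this]
    exact prod_congr rfl (fun _ _ => by ring)
  rw [e]
  apply mul_nonneg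
  · apply prod_nonneg
    intro i hi
    have := h1 i (mem_range.1 hi)
    have h3 := hx i
    rw [sub_nonneg, inv_mul_eq_div, one_le_div h3]; exact this
  · apply prod_nonneg
    intro i hi
    have := h2 i (mem_Ico.1 hi).1
    have h3 := hx i
    rw [sub_nonneg, inv_mul_eq_div, div_le_one h3]; exact this

/-- real positive roots, distinct -/
def RP (N : ℕ) (P : ℝ[X]) : Prop :=
  ∃ x : ℕ → ℝ, (∀ j, 0 < x j) ∧ StrictMono x ∧ P = pU N (fun j => (x j)⁻¹)

def Mesh (p : ℝ) (N : ℕ) (P : ℝ[X]) : Prop :=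
  ∃ x : ℕ → ℝ, (∀ j, 0 < x j) ∧ (∀ j, x j / p ≤ x (j+1)) ∧ P = pU N (fun j => (x j)⁻¹)

lemma mesh_strictMono {p : ℝ} (hp0 : 0 < p) (hp1 : p < 1) {x : ℕ → ℝ} (hx : ∀ j, 0 < x j)
    (hm : ∀ j, x j / p ≤ x (j+1)) : StrictMono x := by
  apply strictMono_nat_of_lt_succ
  intro n
  refine lt_of_lt_of_le ?_ (hm n)
  rw [lt_div_iff₀ hp0]
  nlinarith [hx n]

lemma Mesh.rp {p : ℝ} (hp0 : 0 < p) (hp1 : p < 1) {N : ℕ} {P : ℝ[X]} (h : Mesh p N P) :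
    RP N P := by
  obtain ⟨x, hx, hm, h⟩ := h
  exact ⟨x, hx, mesh_strictMono hp0 hp1 hx hm, h⟩

lemma ivt_sign (h : ℝ → ℝ) (hc : Continuous h) (e : ℝ) (he : e ≠ 0) (l r : ℝ) (hlr : l ≤ r)
    (hl : 0 ≤ e * h l) (hr : e * h r ≤ 0) : ∃ y, l ≤ y ∧ y ≤ r ∧ h y = 0 := by
  have hcc : ContinuousOn (fun t => e * h t) (Set.Icc l r) := by fun_prop
  obtain ⟨y, hy, hy0⟩ := intermediate_value_Icc' hlr hcc ⟨hr, hl⟩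
  refine ⟨y, hy.1, hy.2, ?_⟩
  simpa [he] using hy0

/-- one multiplier step -/
lemma Mesh.step {p : ℝ} (hp0 : 0 < p) (hp1 : p < 1) {N : ℕ} {P : ℝ[X]} (h : Mesh p N P)
    {b : ℝ} (hb0 : 0 ≤ b) (hb1 : b < 1) :
    Mesh p N (C (1-b)⁻¹ * (P - C b * P.comp (C p * X))) := by
  obtain ⟨x, hx, hm, hP⟩ := h
  have hmono := mesh_strictMono hp0 hp1 hx hm
  have h1b : (1 - b) ≠ 0 := by linarith
  set Q := C (1-b)⁻¹ * (P - C b * P.comp (C p * X)) with hQ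
  have hP0 : P.eval 0 = 1 := by rw [hP, ← coeff_zero_eq_eval_zero, pU_coeff_zero]
  have hPr : ∀ j < N, P.eval (x j) = 0 := by
    intro j hj
    rw [hP, pU_eval]
    apply prod_eq_zero (mem_range.2 hj)
    have := (hx j).ne'
    field_simp; simp
  have hev : ∀ w, Q.eval w = (1-b)⁻¹ * (P.eval w - b * P.eval (p * w)) := by
    intro w; simp [hQ, eval_comp]
  have hQ0 : Q.eval 0 = 1 := by
    rw [hev]; simp [hP0, h1b]
  have hi : 0 < (1-b)⁻¹ := inv_pos.2 (by linarith)
  have key : ∀ j, ∃ y, 0 < y ∧ y ≤ x j ∧ (∀ i, j = i + 1 → x i / p ≤ y) ∧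
      (j < N → Q.eval y = 0) := by
    intro j
    by_cases hj : j < N
    swap
    · refine ⟨x j, hx j, le_rfl, ?_, fun h => absurd h hj⟩
      rintro i rfl
      exact hm i
    have hsr : (-1)^j * Q.eval (x j) ≤ 0 := by
      rw [hev, hPr j hj]
      have : 0 ≤ (-1)^j * P.eval (p * x j) := by
        rw [hP]
        apply sign_lemma N j hj.le x hx
        · intro i hij
          obtain ⟨k, rfl⟩ : ∃ k, j = k + 1 := ⟨j - 1, by omega⟩
          have h1 : x i ≤ x k := hmono.monotone (by omega)
          have h2 := hm k
          rw [div_le_iff₀ hp0] at h2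
          linarith
        · intro i hij
          have h1 : x j ≤ x i := hmono.monotone hij
          nlinarith [hx j]
      have h3 := mul_nonneg (mul_nonneg hi.le hb0) this
      calc _ = -((1 - b)⁻¹ * b * ((-1) ^ j * eval (p * x j) P)) := by ring
        _ ≤ 0 := by linarith
    rcases j with _ | k
    · obtain ⟨y, hy1, hy2, hy3⟩ := ivt_sign (fun t => Q.eval t) (by fun_prop) 1 one_ne_zero 0 (x 0)
        (hx 0).le (by simp [hQ0]) (by simpa using hsr)
      refine ⟨y, ?_, hy2, by omega, fun _ => hy3⟩
      rcases hy1.lt_or_eq with h | h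
      · exact h
      · subst h; simp [hQ0] at hy3
    · have hsl : 0 ≤ (-1)^(k+1) * Q.eval (x k / p) := by
        rw [hev, mul_div_cancel₀ _ hp0.ne', hPr k (by omega)]
        have : 0 ≤ (-1)^(k+1) * P.eval (x k / p) := by
          rw [hP]
          apply sign_lemma N (k+1) hj.le x hx
          · intro i hij
            have h1 : x i ≤ x k := hmono.monotone (by omega)
            rw [le_div_iff₀ hp0]
            nlinarith [hx i]
          · intro i hij
            exact (hm k).trans (hmono.monotone hij)
        have h3 := mul_nonneg hi.le this
        calc 0 ≤ _ := h3
          _ = _ := by ring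
      obtain ⟨y, hy1, hy2, hy3⟩ := ivt_sign (fun t => Q.eval t) (by fun_prop) ((-1)^(k+1))
        (by simp) (x k / p) (x (k+1)) (hm k) hsl hsr
      refine ⟨y, lt_of_lt_of_le (div_pos (hx k) hp0) hy1, hy2, ?_, fun _ => hy3⟩
      intro i hi
      obtain rfl : k = i := by omega
      exact hy1
  choose y hy0 hyx hym hyr using key
  have hmy : ∀ j, y j / p ≤ y (j+1) := by
    intro j
    refine le_trans ?_ (hym (j+1) j rfl)
    exact div_le_div_of_nonneg_right (hyx j) hp0.le
  refine ⟨y, hy0, hmy, ?_⟩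
  apply eq_pU
  · rw [coeff_zero_eq_eval_zero, hQ0]
  · rw [hQ]
    refine (natDegree_C_mul_le _ _).trans ?_
    have hPd : P.natDegree ≤ N := by rw [hP]; exact pU_natDegree _ _
    refine (natDegree_sub_le _ _).trans (max_le hPd ?_)
    refine (natDegree_C_mul_le _ _).trans ?_
    refine natDegree_comp_le.trans ?_
    have : (C p * X : ℝ[X]).natDegree ≤ 1 := by compute_degree
    nlinarith
  · intro j _; exact hy0 j
  · intro i j hij _; exact mesh_strictMono hp0 hp1 hy0 hmy hij
  · exact hyr

/-- Rolle step -/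
lemma RP.rolle {N : ℕ} {P : ℝ[X]} (h : RP N P) :
    RP N (P + C 2 * (X * derivative P)) := by
  obtain ⟨x, hx, hmono, hP⟩ := h
  set Q := P + C 2 * (X * derivative P) with hQ
  have hP0 : P.eval 0 = 1 := by rw [hP, ← coeff_zero_eq_eval_zero, pU_coeff_zero]
  have hQ0 : Q.eval 0 = 1 := by simp [hQ, hP0]
  have hPr : ∀ j < N, P.eval (x j) = 0 := by
    intro j hj
    rw [hP, pU_eval]
    apply prod_eq_zero (mem_range.2 hj)
    have := (hx j).ne'
    field_simp; simp
  have hroll : ∀ l r, 0 ≤ l → l < r → √l * P.eval l = 0 → P.eval r = 0 →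
      ∃ y, l < y ∧ y < r ∧ Q.eval y = 0 := by
    intro l r hl hlr h1 h2
    obtain ⟨c, hc, hc0⟩ := exists_hasDerivAt_eq_zero (f := fun t => √t * P.eval t)
      (f' := fun t => 1 / (2 * √t) * P.eval t + √t * (derivative P).eval t) hlr (by fun_prop)
      (by simp only [h1, h2, mul_zero]) (by
        intro t ht
        exact (Real.hasDerivAt_sqrt (by linarith [ht.1])).mul (P.hasDerivAt t))
    refine ⟨c, hc.1, hc.2, ?_⟩
    have hcp : 0 < c := by linarith [hc.1]
    have hs : 0 < √c := Real.sqrt_pos.2 hcp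
    have hsq : √c * √c = c := Real.mul_self_sqrt hcp.le
    simp only [hQ, eval_add, eval_mul, eval_C, eval_X]
    have : 2 * √c * (1 / (2 * √c) * P.eval c + √c * (derivative P).eval c) = 0 := by
      rw [hc0, mul_zero]
    have e : 2 * √c * (1 / (2 * √c) * P.eval c + √c * (derivative P).eval c)
       = P.eval c + 2 * ((√c * √c) * (derivative P).eval c) := by
      field_simp
    rw [e, hsq] at this
    exact this
  have key : ∀ j, ∃ y, 0 < y ∧ y ≤ x j ∧ (∀ i, j = i + 1 → x i < y) ∧
      (j < N → Q.eval y = 0) := by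
    intro j
    by_cases hj : j < N
    swap
    · refine ⟨x j, hx j, le_rfl, ?_, fun h => absurd h hj⟩
      rintro i rfl
      exact hmono (by omega)
    rcases j with _ | k
    · obtain ⟨y, h1, h2, h3⟩ := hroll 0 (x 0) le_rfl (hx 0) (by simp) (hPr 0 hj)
      exact ⟨y, h1, h2.le, by omega, fun _ => h3⟩
    · obtain ⟨y, h1, h2, h3⟩ := hroll (x k) (x (k+1)) (hx k).le (hmono (by omega))
        (by simp [hPr k (by omega)]) (hPr (k+1) hj)
      refine ⟨y, (hx k).trans h1, h2.le, ?_, fun _ => h3⟩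
      intro i hi
      obtain rfl : k = i := by omega
      exact h1
  choose y hy0 hyx hym hyr using key
  have hmy : StrictMono y := by
    apply strictMono_nat_of_lt_succ
    intro j
    exact lt_of_le_of_lt (hyx j) (hym (j+1) j rfl)
  refine ⟨y, hy0, hmy, ?_⟩
  have hPd : P.natDegree ≤ N := by rw [hP]; exact pU_natDegree _ _
  apply eq_pU
  · rw [coeff_zero_eq_eval_zero, hQ0]
  · rw [hQ]
    refine (natDegree_add_le _ _).trans (max_le hPd ?_)
    refine (natDegree_C_mul_le _ _).trans ?_
    rw [natDegree_le_iff_coeff_eq_zero]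
    intro n hn
    rcases n with _ | n
    · omega
    · rw [coeff_X_mul, coeff_derivative, coeff_eq_zero_of_natDegree_lt (by omega), zero_mul]
  · intro j _; exact hy0 j
  · intro i j hij _; exact hmy hij
  · exact hyr

/-- scaling -/
lemma RP.scale {N : ℕ} {P : ℝ[X]} (h : RP N P) {s : ℝ} (hs : 0 < s) :
    RP N (P.comp (C s * X)) := by
  obtain ⟨x, hx, hmono, hP⟩ := h
  refine ⟨fun j => x j / s, fun j => div_pos (hx j) hs, ?_, ?_⟩
  · intro i j hij
    exact div_lt_div_of_pos_right (hmono hij) hs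
  · rw [hP, pU, pU, Polynomial.prod_comp]
    apply prod_congr rfl
    intro i _
    simp only [sub_comp, one_comp, mul_comp, C_comp, X_comp, inv_div]
    rw [← mul_assoc, ← C_mul]
    congr 3
    rw [inv_mul_eq_div]

end QML


namespace QML
open Polynomial Filter Topology Finset

def Approx (f : ℕ → ℝ) : Prop :=
  ∃ P : ℕ → ℝ[X], (∀ N, RP N (P N)) ∧ (∀ N n, |(P N).coeff n| ≤ f n) ∧
    ∀ n, Tendsto (fun N => (P N).coeff n) atTop (𝓝 ((-1)^n * f n))

lemma Approx.rolle {f : ℕ → ℝ} (h : Approx f) : Approx (fun n => (2 * n + 1) * f n) := by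
  obtain ⟨P, h1, h2, h3⟩ := h
  have hc : ∀ N n, (P N + C 2 * (X * derivative (P N))).coeff n = (2 * n + 1) * (P N).coeff n := by
    intro N n
    rw [coeff_add, coeff_C_mul]
    rcases n with _ | n
    · simp
    · rw [coeff_X_mul, coeff_derivative]; push_cast; ring
  refine ⟨fun N => P N + C 2 * (X * derivative (P N)), fun N => (h1 N).rolle, ?_, ?_⟩
  · intro N n
    rw [hc, abs_mul, abs_of_nonneg (by positivity)]
    exact mul_le_mul_of_nonneg_left (h2 N n) (by positivity)
  · intro n
    simp only [hc]
    have := (h3 n).const_mul (2 * (n:ℝ) + 1)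
    convert this using 2
    ring

/-- iterated multiplier polynomials -/
noncomputable def meshQ (p a : ℝ) (N : ℕ) : ℕ → ℝ[X]
  | 0 => pU N (fun k => p ^ k)
  | m + 1 => C (1 - a * p ^ m)⁻¹ *
      (meshQ p a N m - C (a * p ^ m) * (meshQ p a N m).comp (C p * X))

lemma meshQ_mesh {p a : ℝ} (hp0 : 0 < p) (hp1 : p < 1) (ha0 : 0 ≤ a) (ha1 : a < 1) (N m : ℕ) :
    Mesh p N (meshQ p a N m) := by
  induction m with
  | zero =>
    refine ⟨fun k => (p ^ k)⁻¹, fun j => by positivity, fun j => ?_, ?_⟩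
    · apply le_of_eq; field_simp; ring
    · simp [meshQ]
  | succ m ih =>
    have h1 : p ^ m ≤ 1 := pow_le_one₀ hp0.le hp1.le
    have h0 : 0 < p ^ m := by positivity
    exact ih.step hp0 hp1 (by positivity) (by nlinarith)

lemma euler_fun {p : ℝ} (N : ℕ) :
    (pU N (fun k => p ^ k)).comp (C p * X) * (1 - X) = pU N (fun k => p ^ k) * (1 - C (p ^ N) * X) := by
  induction N with
  | zero => simp [pU]
  | succ n ih =>
    have e : (1 - C (p ^ n) * X : ℝ[X]).comp (C p * X) = 1 - C (p ^ (n+1)) * X := by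
      simp [pow_succ]; ring
    rw [pU_succ, mul_comp, e]
    calc _ = ((pU n (fun k => p ^ k)).comp (C p * X) * (1 - X)) * (1 - C (p ^ (n+1)) * X) := by ring
      _ = _ := by rw [ih]

lemma euler_coeff {p : ℝ} (N n : ℕ) :
    (pU N (fun k => p ^ k)).coeff (n+1) * (1 - p ^ (n+1)) =
      - (pU N (fun k => p ^ k)).coeff n * (p ^ n - p ^ N) := by
  have h := congrArg (fun Q : ℝ[X] => Q.coeff (n+1)) (euler_fun (p := p) N)
  set E := pU N (fun k => p ^ k)
  have e : E * (1 - C (p ^ N) * X) = E - C (p^N) * (E * X) := by ring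
  simp only [e, mul_sub, mul_one, coeff_sub, coeff_mul_X, coeff_C_mul, comp_C_mul_X_coeff] at h
  linarith

lemma meshQ_coeff {p a : ℝ} (hp0 : 0 < p) (hp1 : p < 1) (ha0 : 0 ≤ a) (ha1 : a < 1) (N m n : ℕ) :
    (meshQ p a N m).coeff (n+1) * ((1 - p ^ (n+1)) * (1 - a * p ^ n)) =
      - (meshQ p a N m).coeff n * ((p ^ n - p ^ N) * (1 - a * p ^ (n + m))) := by
  induction m with
  | zero =>
    have := euler_coeff (p := p) N n
    simp only [meshQ, add_zero]
    linear_combination (1 - a * p ^ n) * this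
  | succ m ih =>
    have h1 : p ^ m ≤ 1 := pow_le_one₀ hp0.le hp1.le
    have h0 : 0 < p ^ m := by positivity
    have h2 : 1 - a * p ^ m ≠ 0 := by nlinarith
    simp only [meshQ, coeff_C_mul, coeff_sub, comp_C_mul_X_coeff]
    field_simp
    linear_combination (1 - a * p ^ (m + n + 1)) * ih

lemma approx_mesh {p a s : ℝ} (hp0 : 0 < p) (hp1 : p < 1) (ha0 : 0 ≤ a) (ha1 : a < 1) (hs : 0 < s)
    (f : ℕ → ℝ) (f0 : f 0 = 1)
    (hf : ∀ n, f (n+1) = f n * (s * p ^ n / ((1 - p ^ (n+1)) * (1 - a * p ^ n)))) : Approx f := by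
  have hA : ∀ n, 0 < 1 - p ^ (n+1) := fun n => by
    have := pow_lt_one₀ hp0.le hp1 (Nat.succ_ne_zero n); simpa using this
  have hle : ∀ n, p ^ n ≤ 1 := fun n => pow_le_one₀ hp0.le hp1.le
  have hB : ∀ n, 0 < 1 - a * p ^ n := fun n => by
    have := hle n
    have h0 : 0 < p ^ n := by positivity
    nlinarith
  have hrp : ∀ N, RP N ((meshQ p a N N).comp (C s * X)) := fun N =>
    ((meshQ_mesh hp0 hp1 ha0 ha1 N N).rp hp0 hp1).scale hs
  set P : ℕ → ℝ[X] := fun N => (meshQ p a N N).comp (C s * X) with hP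
  have hr : ∀ N n, (P N).coeff (n+1) = -(P N).coeff n *
      (s * (p ^ n - p ^ N) * (1 - a * p ^ (n + N)) / ((1 - p ^ (n+1)) * (1 - a * p ^ n))) := by
    intro N n
    have := meshQ_coeff hp0 hp1 ha0 ha1 N N n
    have h1 := (hA n).ne'
    have h2 := (hB n).ne'
    simp only [hP, comp_C_mul_X_coeff]
    rw [← mul_div_assoc, eq_div_iff (mul_ne_zero h1 h2)]
    linear_combination s ^ (n+1) * this
  have h0 : ∀ N, (P N).coeff 0 = 1 := by
    intro N
    obtain ⟨x, -, -, h⟩ := hrp N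
    show ((meshQ p a N N).comp (C s * X)).coeff 0 = 1
    rw [h, pU_coeff_zero]
  refine ⟨P, hrp, ?_, ?_⟩
  · intro N n
    induction n with
    | zero => simp [h0, f0]
    | succ n ih =>
      have hfn : 0 ≤ f n := (abs_nonneg _).trans ih
      have hAn := hA n
      have hBn := hB n
      by_cases hn : n ≤ N
      · rw [hr, hf, abs_mul, abs_neg]
        apply mul_le_mul ih _ (abs_nonneg _) hfn
        have h1 : p ^ N ≤ p ^ n := pow_le_pow_of_le_one hp0.le hp1.le hn
        have h2 : 0 < p ^ N := by positivity
        have h3 := hB (n + N)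
        have h4 : 0 < p ^ (n + N) := by positivity
        rw [abs_of_nonneg (by
          apply div_nonneg _ (by positivity)
          exact mul_nonneg (mul_nonneg hs.le (by linarith)) h3.le)]
        apply div_le_div_of_nonneg_right _ (by positivity)
        have h5 : s * (p ^ n - p ^ N) ≤ s * p ^ n := by nlinarith
        have h6 : 1 - a * p ^ (n + N) ≤ 1 := by nlinarith
        have h7 : 0 ≤ s * p ^ n := by positivity
        calc _ ≤ s * p ^ n * 1 := mul_le_mul h5 h6 h3.le h7
          _ = _ := by ring
      · have : (P N).coeff (n+1) = 0 := by
          obtain ⟨x, -, -, h⟩ := hrp N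
          apply coeff_eq_zero_of_natDegree_lt
          show ((meshQ p a N N).comp (C s * X)).natDegree < n + 1
          rw [h]
          have := pU_natDegree N (fun j => (x j)⁻¹)
          omega
        rw [this, abs_zero, hf]
        positivity
  · intro n
    induction n with
    | zero => simp [h0, f0]
    | succ n ih =>
      simp only [hr, hf]
      have t1 : Tendsto (fun N => p ^ N) atTop (𝓝 0) := tendsto_pow_atTop_nhds_zero_of_lt_one hp0.le hp1
      have t2 : Tendsto (fun N => p ^ (n + N)) atTop (𝓝 0) := by
        simp only [pow_add]
        simpa using t1.const_mul (p ^ n)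
      have t3 : Tendsto (fun N => s * (p ^ n - p ^ N) * (1 - a * p ^ (n + N)) /
          ((1 - p ^ (n+1)) * (1 - a * p ^ n))) atTop
          (𝓝 (s * (p ^ n - 0) * (1 - a * 0) / ((1 - p ^ (n+1)) * (1 - a * p ^ n)))) :=
        (((t1.const_sub _).const_mul s).mul ((t2.const_mul a).const_sub 1)).div_const _
      convert ih.neg.mul t3 using 2
      ring

lemma alt_up (T : ℕ → ℝ) (m : ℕ) (h0 : ∀ k, 0 ≤ T k) (hm : ∀ k < m, T k ≤ T (k+1)) :
    0 ≤ (-1)^m * ∑ k ∈ range (m+1), (-1)^k * T k ∧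
    (-1)^m * ∑ k ∈ range (m+1), (-1)^k * T k ≤ T m := by
  induction m with
  | zero => simp [h0]
  | succ m ih =>
    have ih := ih (fun k hk => hm k (by omega))
    have h := hm m (by omega)
    have e : (-1:ℝ)^(m+1) * ∑ k ∈ range (m+1+1), (-1)^k * T k =
        T (m+1) - (-1)^m * ∑ k ∈ range (m+1), (-1)^k * T k := by
      rw [sum_range_succ, mul_add, ← mul_assoc, ← mul_pow]
      simp [pow_succ]; ring
    rw [e]
    constructor <;> linarith [ih.1, ih.2]

lemma alt_down (m : ℕ) : ∀ (T : ℕ → ℝ), (∀ k, 0 ≤ T k) → (∀ k, T (k+1) ≤ T k) →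
    0 ≤ ∑ k ∈ range m, (-1)^k * T k ∧ ∑ k ∈ range m, (-1)^k * T k ≤ T 0 := by
  induction m with
  | zero => intro T h _; simp [h]
  | succ m ih =>
    intro T h0 hT
    have ih := ih (fun k => T (k+1)) (fun k => h0 _) (fun k => hT _)
    have e : ∑ k ∈ range (m+1), (-1)^k * T k = T 0 - ∑ k ∈ range m, (-1)^k * T (k+1) := by
      rw [sum_range_succ']
      simp [pow_succ]; ring
    rw [e]
    have := hT 0
    simp only [zero_add] at *
    constructor <;> linarith [ih.1, ih.2]

noncomputable def trunc (f : ℕ → ℝ) (N : ℕ) : ℝ[X] :=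
  ∑ k ∈ range (N+1), C ((-1)^k * f k) * X ^ k

lemma trunc_coeff (f : ℕ → ℝ) (N n : ℕ) :
    (trunc f N).coeff n = if n ≤ N then (-1)^n * f n else 0 := by
  simp only [trunc, finsetSum_coeff, coeff_C_mul, coeff_X_pow]
  simp

lemma trunc_eval (f : ℕ → ℝ) (N : ℕ) (w : ℝ) :
    (trunc f N).eval w = ∑ k ∈ range (N+1), (-1)^k * (f k * w ^ k) := by
  simp [trunc, eval_finsetSum, mul_assoc]

lemma hutch_rp (f : ℕ → ℝ) (f0 : f 0 = 1) (fp : ∀ n, 0 < f n)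
    (hf : ∀ n, 4 * (f n * f (n+2)) < f (n+1) ^ 2) (N : ℕ) : RP N (trunc f N) := by
  set t : ℕ → ℝ := fun n => f n / f (n+1) with ht
  have tp : ∀ n, 0 < t n := fun n => div_pos (fp _) (fp _)
  have t4 : ∀ n, 4 * t n < t (n+1) := by
    intro n
    simp only [ht]
    rw [← mul_div_assoc, div_lt_div_iff₀ (fp _) (fp _)]
    have := hf n
    nlinarith
  have tm : StrictMono t := strictMono_nat_of_lt_succ (fun n => by linarith [t4 n, tp n])
  have ft : ∀ n, f n = t n * f (n+1) := fun n => by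
    simp only [ht]; rw [div_mul_cancel₀ _ (fp _).ne']
  -- sign at 2 t n
  have sg : ∀ n < N, 0 < (-1)^(n+1) * (trunc f N).eval (2 * t n) := by
    intro n hn
    set w := 2 * t n with hw
    have wp : 0 < w := by have := tp n; positivity
    set T : ℕ → ℝ := fun k => f k * w ^ k with hT
    have Tp : ∀ k, 0 < T k := fun k => mul_pos (fp k) (pow_pos wp k)
    have Ts : ∀ k, T (k+1) * t k = T k * w := by
      intro k; simp only [hT]; rw [ft k]; ring
    rw [trunc_eval]
    have e1 : ∑ k ∈ range (N+1), (-1:ℝ)^k * (f k * w ^ k) =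
        ∑ k ∈ range (n+1), (-1:ℝ)^k * T k + (-1)^(n+1) * T (n+1) +
         (-1)^(n+2) * ∑ k ∈ range (N - (n+1)), (-1:ℝ)^k * T (n+2+k) := by
      have : N + 1 = (n + 1 + 1) + (N - (n+1)) := by omega
      rw [this, sum_range_add, sum_range_succ, mul_sum]
      congr 1
      apply sum_congr rfl
      intro k _
      simp only [hT]; ring
    have hu := alt_up T n (fun k => (Tp k).le) (by
      intro k hk
      have h1 := Ts k
      have h2 : t k < t n := tm hk
      have h3 := Tp (k+1)
      have h4 := tp n
      have h5 := Tp k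
      nlinarith)
    have hd := alt_down (N - (n+1)) (fun k => T (n+2+k)) (fun k => (Tp _).le) (by
      intro k
      have h1 := Ts (n+2+k)
      have h2 : t (n+1) < t (n+2+k) := tm (by omega)
      have h3 := t4 n
      have h4 := tp n
      have h5 := Tp (n+2+k)
      have h6 := Tp (n+2+k+1)
      show T (n+2+k+1) ≤ T (n+2+k)
      nlinarith)
    have h1 := Ts n
    have h2 := Ts (n+1)
    have h3 := t4 n
    have h4 := tp n
    have h5 : 2 * T n = T (n+1) := by
      have : t n * (2 * T n) = t n * T (n+1) := by rw [hw] at h1; linarith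
      exact mul_left_cancel₀ h4.ne' this
    have h6 : 2 * T (n+2) < T (n+1) := by
      have := Tp (n+2)
      have h7 := Tp (n+1)
      have h8 : T (n+2) * t (n+1) = T (n+1) * (2 * t n) := h2
      by_contra hcon
      push Not at hcon
      nlinarith
    rw [e1]
    have e2 : (-1:ℝ)^(n+1) * (∑ k ∈ range (n+1), (-1:ℝ)^k * T k + (-1)^(n+1) * T (n+1) +
         (-1)^(n+2) * ∑ k ∈ range (N - (n+1)), (-1:ℝ)^k * T (n+2+k)) =
         T (n+1) - (-1)^n * ∑ k ∈ range (n+1), (-1:ℝ)^k * T k -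
          ∑ k ∈ range (N - (n+1)), (-1:ℝ)^k * T (n+2+k) := by
      have : (-1:ℝ)^n * (-1)^n = 1 := by rw [← mul_pow]; simp
      simp only [pow_succ]
      linear_combination (T (n+1) - ∑ k ∈ range (N - (n+1)), (-1:ℝ)^k * T (n+2+k)) * this
    rw [e2]
    simp only [add_zero] at hd
    linarith [hu.2, hd.2]
  have hQ0 : (trunc f N).eval 0 = 1 := by
    rw [← coeff_zero_eq_eval_zero, trunc_coeff]; simp [f0]
  set Q := trunc f N
  have key : ∀ j, ∃ y, 0 < y ∧ y < 2 * t j ∧ (∀ i, j = i + 1 → 2 * t i < y) ∧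
      (j < N → Q.eval y = 0) := by
    intro j
    by_cases hj : j < N
    swap
    · rcases j with _ | k
      · exact ⟨t 0, tp 0, by linarith [tp 0], by omega, fun h => absurd h hj⟩
      · refine ⟨t (k+1), tp _, by linarith [tp (k+1)], ?_, fun h => absurd h hj⟩
        intro i hi
        obtain rfl : k = i := by omega
        linarith [t4 k, tp k]
    have hs := sg j hj
    rcases j with _ | k
    · obtain ⟨y, hy1, hy2, hy3⟩ := ivt_sign (fun t => Q.eval t) (by fun_prop) 1 one_ne_zero 0
        (2 * t 0) (by linarith [tp 0]) (by simp [hQ0]) (by simp at hs ⊢; linarith)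
      refine ⟨y, ?_, ?_, by omega, fun _ => hy3⟩
      · rcases hy1.lt_or_eq with h | h
        · exact h
        · subst h; simp [hQ0] at hy3
      · rcases hy2.lt_or_eq with h | h
        · exact h
        · subst h
          rw [hy3] at hs; simp at hs
    · have hs' := sg k (by omega)
      obtain ⟨y, hy1, hy2, hy3⟩ := ivt_sign (fun t => Q.eval t) (by fun_prop) ((-1)^(k+1))
        (by simp) (2 * t k) (2 * t (k+1)) (by linarith [t4 k, tp k]) hs'.le
        (by rw [pow_succ] at hs; linarith)
      have hy1' : 2 * t k < y := by
        rcases hy1.lt_or_eq with h | h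
        · exact h
        · subst h; rw [hy3] at hs'; simp at hs'
      refine ⟨y, by linarith [tp k], ?_, ?_, fun _ => hy3⟩
      · rcases hy2.lt_or_eq with h | h
        · exact h
        · subst h; rw [hy3] at hs; simp at hs
      · intro i hi
        obtain rfl : k = i := by omega
        exact hy1'
  choose y hy0 hyx hym hyr using key
  have hmy : StrictMono y := by
    apply strictMono_nat_of_lt_succ
    intro j
    exact (hyx j).trans (hym (j+1) j rfl)
  refine ⟨y, hy0, hmy, ?_⟩
  apply eq_pU
  · rw [coeff_zero_eq_eval_zero, hQ0]
  · rw [natDegree_le_iff_coeff_eq_zero]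
    intro n hn
    rw [trunc_coeff, if_neg (by omega)]
  · intro j _; exact hy0 j
  · intro i j hij _; exact hmy hij
  · exact hyr

lemma approx_hutch (f : ℕ → ℝ) (f0 : f 0 = 1) (fp : ∀ n, 0 < f n)
    (hf : ∀ n, 4 * (f n * f (n+2)) < f (n+1) ^ 2) : Approx f := by
  refine ⟨trunc f, hutch_rp f f0 fp hf, ?_, ?_⟩
  · intro N n
    rw [trunc_coeff]
    split_ifs
    · rw [abs_mul]; simp [abs_of_pos (fp n)]
    · simp [(fp n).le]
  · intro n
    apply tendsto_const_nhds.congr'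
    filter_upwards [eventually_ge_atTop n] with N hN
    rw [trunc_coeff, if_pos hN]

end QML


namespace QML
open Polynomial Filter Topology Finset

noncomputable def Fc (k : ℕ → ℝ) (w : ℂ) : ℂ := ∑' n, (((-1)^n * k n : ℝ) : ℂ) * w ^ n
noncomputable def Fr (k : ℕ → ℝ) (x : ℝ) : ℝ := ∑' n, ((-1)^n * k n) * x ^ n

lemma Fc_ofReal (k : ℕ → ℝ) (x : ℝ) : Fc k x = (Fr k x : ℂ) := by
  rw [Fc, Fr, Complex.ofReal_tsum]
  push_cast
  rfl

lemma Fc_tendsto {k : ℕ → ℝ} (hk : ∀ R : ℝ, 0 ≤ R → Summable (fun n => k n * R ^ n))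
    {c : ℕ → ℕ → ℝ} (hc : ∀ N n, |c N n| ≤ k n)
    (ht : ∀ n, Tendsto (fun N => c N n) atTop (𝓝 ((-1)^n * k n))) (w : ℂ) :
    Tendsto (fun N => ∑' n, (c N n : ℂ) * w ^ n) atTop (𝓝 (Fc k w)) := by
  apply tendsto_tsum_of_dominated_convergence (hk ‖w‖ (norm_nonneg _))
  · intro n
    exact ((Complex.continuous_ofReal.tendsto _).comp (ht n)).mul_const _
  · refine Eventually.of_forall fun N n => ?_
    rw [norm_mul, norm_pow, Complex.norm_real]
    exact mul_le_mul_of_nonneg_right (hc N n) (by positivity)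

lemma Fr_continuous {k : ℕ → ℝ} (k0 : ∀ n, 0 ≤ k n)
    (hk : ∀ R : ℝ, 0 ≤ R → Summable (fun n => k n * R ^ n)) : Continuous (Fr k) := by
  rw [continuous_iff_continuousAt]
  intro x
  have : ContinuousOn (Fr k) (Metric.ball 0 (|x| + 1)) := by
    apply continuousOn_tsum (u := fun n => k n * (|x| + 1) ^ n)
    · intro n; fun_prop
    · exact hk _ (by positivity)
    · intro n t ht
      rw [norm_mul, norm_mul, norm_pow, norm_pow, norm_neg, norm_one, one_pow, one_mul,
        Real.norm_of_nonneg (k0 n)]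
      apply mul_le_mul_of_nonneg_left _ (k0 n)
      apply pow_le_pow_left₀ (norm_nonneg _)
      simpa using (Metric.mem_ball.1 ht).le
  exact this.continuousAt (Metric.isOpen_ball.mem_nhds (by simp))

lemma poly_tsum (P : ℝ[X]) (w : ℂ) :
    (P.map Complex.ofRealHom).eval w = ∑' n, (P.coeff n : ℂ) * w ^ n := by
  rw [tsum_eq_sum (s := range (P.natDegree + 1)), eval_map, eval₂_eq_sum_range]
  · rfl
  · intro n hn
    rw [coeff_eq_zero_of_natDegree_lt (by simpa using hn)]
    simp

lemma poly_tsum_deriv (P : ℝ[X]) (w : ℂ) :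
    w * ((derivative P).map Complex.ofRealHom).eval w =
      ∑' n : ℕ, (((n:ℝ) * P.coeff n : ℝ) : ℂ) * w ^ n := by
  have h := poly_tsum (X * derivative P) w
  rw [Polynomial.map_mul, eval_mul, map_X, eval_X] at h
  rw [h]
  congr 1; ext n
  congr 2
  rcases n with _ | n
  · simp
  · rw [coeff_X_mul, coeff_derivative]; push_cast; ring

lemma pU_map (N : ℕ) (u : ℕ → ℝ) :
    (pU N u).map Complex.ofRealHom = pU N (fun j => (u j : ℂ)) := by
  simp [pU, Polynomial.map_prod]

lemma re_term {u : ℝ} {w : ℂ} (hu : 0 ≤ u) (h : u * ‖w‖ < 1) :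
    (w * ((u:ℂ) / (1 - u * w))).re ≤ ‖w‖ * (u / (1 - u * ‖w‖)) := by
  refine (Complex.re_le_norm _).trans ?_
  rw [norm_mul, norm_div, Complex.norm_real, Real.norm_of_nonneg hu]
  apply mul_le_mul_of_nonneg_left _ (norm_nonneg _)
  apply div_le_div_of_nonneg_left hu (by linarith)
  have := norm_sub_norm_le (1:ℂ) (u * w)
  rw [norm_one, norm_mul, Complex.norm_real, Real.norm_of_nonneg hu] at this
  exact this

lemma pU_bound {N : ℕ} {u : ℕ → ℝ} (hu : ∀ j, 0 < u j) {x : ℝ}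
    (hpos : ∀ t, 0 ≤ t → t ≤ x → 0 < (pU N u).eval t) : ∀ j < N, u j * x < 1 := by
  intro j hj
  by_contra h
  push Not at h
  have h1 : (u j)⁻¹ ≤ x := by
    rw [inv_le_iff_one_le_mul₀ (hu j)]; linarith
  have := hpos (u j)⁻¹ (inv_pos.2 (hu j)).le h1
  rw [pU_eval, prod_eq_zero (mem_range.2 hj)] at this
  · exact lt_irrefl _ this
  · rw [mul_inv_cancel₀ (hu j).ne', sub_self]

/-- all finite-level facts -/
lemma finite_facts {N : ℕ} {P : ℝ[X]} (hP : RP N P) {x : ℝ}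
    (hpos : ∀ t, 0 ≤ t → t ≤ x → 0 < P.eval t) :
    (∀ w : ℂ, ‖w‖ ≤ x → P.eval ‖w‖ ≤ ‖(P.map Complex.ofRealHom).eval w‖) ∧
    (∀ w : ℂ, ‖w‖ ≤ x → ‖w‖ * (derivative P).eval ‖w‖ / P.eval ‖w‖ ≤
      (w * ((derivative P).map Complex.ofRealHom).eval w / (P.map Complex.ofRealHom).eval w).re) ∧
    (∀ t, 0 ≤ t → t ≤ x → t * (derivative P).eval t / P.eval t ≤ t * P.coeff 1) ∧
    (∀ t t', 0 ≤ t → t ≤ t' → t' ≤ x → t * (t' * (derivative P).eval t' / P.eval t') ≤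
       t' * (t * (derivative P).eval t / P.eval t)) := by
  obtain ⟨y, hy, -, rfl⟩ := hP
  set u : ℕ → ℝ := fun j => (y j)⁻¹ with hu'
  have hu : ∀ j, 0 < u j := fun j => inv_pos.2 (hy j)
  have hb := pU_bound hu hpos
  have hbt : ∀ t, t ≤ x → ∀ j < N, 0 < 1 - u j * t := by
    intro t ht j hj
    have := hb j hj
    have := hu j
    nlinarith
  have hr : ∀ t, 0 ≤ t → t ≤ x → (derivative (pU N u)).eval t / (pU N u).eval t =
      -∑ j ∈ range N, u j / (1 - u j * t) := by
    intro t h0 ht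
    rw [pU_deriv N u t (fun j hj => (hbt t ht j hj).ne'), mul_div_assoc, div_self (hpos t h0 ht).ne',
      mul_one]
  have hnorm : ∀ w : ℂ, ‖w‖ ≤ x →
      (pU N u).eval ‖w‖ ≤ ‖((pU N u).map Complex.ofRealHom).eval w‖ := by
    intro w hw
    rw [pU_map, pU_eval, pU_eval, norm_prod]
    apply Finset.prod_le_prod
    · intro j hj; exact (hbt _ hw j (mem_range.1 hj)).le
    · intro j hj
      have := norm_sub_norm_le (1:ℂ) (u j * w)
      rw [norm_one, norm_mul, Complex.norm_real, Real.norm_of_nonneg (hu j).le] at this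
      exact this
  refine ⟨hnorm, ?_, ?_, ?_⟩
  · intro w hw
    have hne : ((pU N u).map Complex.ofRealHom).eval w ≠ 0 := by
      rw [← norm_pos_iff]
      exact lt_of_lt_of_le (hpos _ (norm_nonneg _) hw) (hnorm w hw)
    rw [mul_div_assoc, mul_div_assoc, hr _ (norm_nonneg _) hw]
    rw [← derivative_map, pU_map]
    rw [pU_map] at hne
    rw [pU_deriv, mul_div_assoc, div_self hne, mul_one, mul_neg, mul_neg, Complex.neg_re,
      neg_le_neg_iff, mul_sum, mul_sum, Complex.re_sum]
    · apply sum_le_sum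
      intro j hj
      exact re_term (hu j).le (by linarith [hbt _ hw j (mem_range.1 hj)])
    · intro j hj h0
      rw [pU_eval] at hne
      exact hne (prod_eq_zero (mem_range.2 hj) h0)
  · intro t h0 ht
    have h1 := hr 0 le_rfl (h0.trans ht)
    rw [← coeff_zero_eq_eval_zero, ← coeff_zero_eq_eval_zero, pU_coeff_zero, div_one,
      coeff_derivative] at h1
    simp at h1
    rw [mul_div_assoc, hr t h0 ht, h1]
    apply mul_le_mul_of_nonneg_left _ h0
    rw [neg_le_neg_iff]
    apply sum_le_sum
    intro j hj
    have h2 := hbt t ht j (mem_range.1 hj)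
    have h3 := hu j
    rw [le_div_iff₀ h2]
    have : 0 ≤ u j * (u j * t) := by positivity
    nlinarith
  · intro t t' h0 htt ht
    have h0' := h0.trans htt
    rw [mul_div_assoc, mul_div_assoc, hr t h0 (htt.trans ht), hr t' h0' ht]
    have : ∑ j ∈ range N, u j / (1 - u j * t) ≤ ∑ j ∈ range N, u j / (1 - u j * t') := by
      apply sum_le_sum
      intro j hj
      have h2 := hbt t' ht j (mem_range.1 hj)
      have h3 := hu j
      apply div_le_div_of_nonneg_left h3.le h2
      nlinarith
    have h5 : 0 ≤ t * t' := by positivity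
    nlinarith [mul_le_mul_of_nonneg_left this h5]

/-- passage to the limit -/
theorem limit_facts {k : ℕ → ℝ} (k1 : 0 < k 1) (kn : ∀ n, 0 ≤ k n)
    (hk : ∀ R : ℝ, 0 ≤ R → Summable (fun n => k n * R ^ n))
    (hk' : ∀ R : ℝ, 0 ≤ R → Summable (fun n : ℕ => (n * k n) * R ^ n))
    (hA : Approx k) {ρ : ℝ} (hpos : ∀ t, 0 ≤ t → t < ρ → 0 < Fr k t) :
    (∀ w : ℂ, ‖w‖ < ρ → Fr (fun n => n * k n) ‖w‖ / Fr k ‖w‖ ≤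
        (Fc (fun n => n * k n) w / Fc k w).re) ∧
    (∀ t t', 0 < t → t < t' → t' < ρ →
      Fr (fun n => n * k n) t' / Fr k t' < Fr (fun n => n * k n) t / Fr k t) := by
  obtain ⟨P, hRP, hbd, hlim⟩ := hA
  have kn' : ∀ n : ℕ, 0 ≤ n * k n := fun n => mul_nonneg (Nat.cast_nonneg _) (kn n)
  -- complex limits
  have limF : ∀ w : ℂ, Tendsto (fun N => ((P N).map Complex.ofRealHom).eval w) atTop
      (𝓝 (Fc k w)) := by
    intro w
    simp only [poly_tsum]
    exact Fc_tendsto hk hbd hlim w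
  have limD : ∀ w : ℂ, Tendsto (fun N => w * ((derivative (P N)).map Complex.ofRealHom).eval w) atTop
      (𝓝 (Fc (fun n => n * k n) w)) := by
    intro w
    simp only [poly_tsum_deriv]
    refine Fc_tendsto (k := fun n => n * k n) hk' (c := fun N n => (n:ℝ) * (P N).coeff n) ?_ ?_ w
    · intro N n
      rw [abs_mul, abs_of_nonneg (Nat.cast_nonneg n)]
      exact mul_le_mul_of_nonneg_left (hbd N n) (Nat.cast_nonneg n)
    · intro n
      convert (hlim n).const_mul (n:ℝ) using 2
      ring
  have evr : ∀ (Q : ℝ[X]) (t : ℝ), (Q.map Complex.ofRealHom).eval (t:ℂ) = ((Q.eval t : ℝ) : ℂ) := by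
    intro Q t
    rw [eval_map]
    exact eval₂_at_apply Complex.ofRealHom t
  have limFr : ∀ t : ℝ, Tendsto (fun N => (P N).eval t) atTop (𝓝 (Fr k t)) := by
    intro t
    have := limF t
    simp only [evr, Fc_ofReal] at this
    exact Complex.continuous_re.continuousAt.tendsto.comp this
  have limDr : ∀ t : ℝ, Tendsto (fun N => t * (derivative (P N)).eval t) atTop
      (𝓝 (Fr (fun n => n * k n) t)) := by
    intro t
    have := limD t
    simp only [evr, Fc_ofReal, ← Complex.ofReal_mul] at this
    exact Complex.continuous_re.continuousAt.tendsto.comp this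
  -- eventual positivity
  have evpos : ∀ x, 0 ≤ x → x < ρ → ∀ᶠ N in atTop, ∀ t, 0 ≤ t → t ≤ x → 0 < (P N).eval t := by
    intro x hx0 hx
    obtain ⟨m, hm, hmin⟩ := (isCompact_Icc (a := (0:ℝ)) (b := x)).exists_isMinOn
      ⟨0, by simp [hx0]⟩ (Fr_continuous kn hk).continuousOn
    have hδ := hpos m hm.1 (lt_of_le_of_lt hm.2 hx)
    have hdiff : Tendsto (fun N => ∑' n, |(P N).coeff n - (-1)^n * k n| * x ^ n) atTop
        (𝓝 (∑' n : ℕ, (0:ℝ))) := by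
      apply tendsto_tsum_of_dominated_convergence ((hk x hx0).mul_left 2)
      · intro n
        have := ((hlim n).sub_const ((-1)^n * k n)).abs.mul_const (x ^ n)
        simpa using this
      · refine Eventually.of_forall fun N n => ?_
        rw [norm_mul, norm_pow, Real.norm_of_nonneg hx0, Real.norm_eq_abs, abs_abs, ← mul_assoc]
        apply mul_le_mul_of_nonneg_right _ (by positivity)
        have h1 := hbd N n
        have h2 := abs_sub ((P N).coeff n) ((-1)^n * k n)
        rw [abs_mul, abs_pow, abs_neg, abs_one, one_pow, one_mul, abs_of_nonneg (kn n)] at h2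
        linarith
    rw [tsum_zero] at hdiff
    filter_upwards [hdiff.eventually (gt_mem_nhds hδ)] with N hN t ht0 htx
    have hS1 : Summable (fun n => (P N).coeff n * t ^ n) :=
      Summable.of_norm_bounded (hk t ht0) (fun n => by
        rw [norm_mul, norm_pow, Real.norm_of_nonneg ht0, Real.norm_eq_abs]
        exact mul_le_mul_of_nonneg_right (hbd N n) (by positivity))
    have hS2 : Summable (fun n => ((-1)^n * k n) * t ^ n) :=
      Summable.of_norm_bounded (hk t ht0) (fun n => by
        rw [norm_mul, norm_pow, Real.norm_of_nonneg ht0, norm_mul]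
        simp [abs_of_nonneg (kn n)])
    have hS3 : Summable (fun n => |(P N).coeff n - (-1)^n * k n| * x ^ n) :=
      Summable.of_norm_bounded ((hk x hx0).mul_left 2) (fun n => by
        rw [norm_mul, norm_pow, Real.norm_of_nonneg hx0, Real.norm_eq_abs, abs_abs, ← mul_assoc]
        apply mul_le_mul_of_nonneg_right _ (by positivity)
        have h1 := hbd N n
        have h2 := abs_sub ((P N).coeff n) ((-1)^n * k n)
        rw [abs_mul, abs_pow, abs_neg, abs_one, one_pow, one_mul, abs_of_nonneg (kn n)] at h2
        linarith)
    have e1 : (P N).eval t = ∑' n, (P N).coeff n * t ^ n := by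
      have := poly_tsum (P N) t
      rw [evr] at this
      exact_mod_cast this
    have h1 : Fr k t - (P N).eval t ≤ ∑' n, |(P N).coeff n - (-1)^n * k n| * x ^ n := by
      rw [e1, Fr, ← hS2.tsum_sub hS1]
      apply (hS2.sub hS1).tsum_le_tsum _ hS3
      intro n
      rw [← sub_mul]
      have h2 : t ^ n ≤ x ^ n := pow_le_pow_left₀ ht0 htx n
      have h3 : 0 ≤ t ^ n := by positivity
      calc _ ≤ |(P N).coeff n - (-1)^n * k n| * t ^ n := by
            apply mul_le_mul_of_nonneg_right _ h3
            rw [abs_sub_comm]; exact le_abs_self _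
        _ ≤ _ := mul_le_mul_of_nonneg_left h2 (abs_nonneg _)
    have h2 : Fr k m ≤ Fr k t := hmin ⟨ht0, htx⟩
    linarith
  constructor
  · intro w hw
    have hp := hpos _ (norm_nonneg w) hw
    have hev := evpos ‖w‖ (norm_nonneg _) hw
    have hge : Fr k ‖w‖ ≤ ‖Fc k w‖ := by
      refine le_of_tendsto_of_tendsto (limFr ‖w‖) (limF w).norm ?_
      filter_upwards [hev] with N hN
      exact (finite_facts (hRP N) hN).1 w le_rfl
    have hne : Fc k w ≠ 0 := by
      rw [← norm_pos_iff]; linarith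
    refine le_of_tendsto_of_tendsto ((limDr ‖w‖).div (limFr ‖w‖) hp.ne')
      (Complex.continuous_re.continuousAt.tendsto.comp ((limD w).div (limF w) hne)) ?_
    filter_upwards [hev] with N hN
    exact (finite_facts (hRP N) hN).2.1 w le_rfl
  · intro t t' h0 htt ht
    have hp := hpos t h0.le (htt.trans ht)
    have hp' := hpos t' (h0.trans htt).le ht
    have hev := evpos t' (h0.trans htt).le ht
    have hL := (limDr t).div (limFr t) hp.ne'
    have hL' := (limDr t').div (limFr t') hp'.ne'
    have i1 : Fr (fun n => n * k n) t / Fr k t ≤ t * (-k 1) := by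
      have h1 := hlim 1
      rw [pow_one, neg_one_mul] at h1
      refine le_of_tendsto_of_tendsto hL (h1.const_mul t) ?_
      filter_upwards [hev] with N hN
      exact (finite_facts (hRP N) hN).2.2.1 t h0.le htt.le
    have i2 : t * (Fr (fun n => n * k n) t' / Fr k t') ≤ t' * (Fr (fun n => n * k n) t / Fr k t) := by
      refine le_of_tendsto_of_tendsto (hL'.const_mul t) (hL.const_mul t') ?_
      filter_upwards [hev] with N hN
      exact (finite_facts (hRP N) hN).2.2.2 t t' h0.le htt.le le_rfl
    set A := Fr (fun n => n * k n) t / Fr k t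
    set B := Fr (fun n => n * k n) t' / Fr k t'
    have hA0 : A < 0 := by nlinarith
    by_contra hcon
    push Not at hcon
    nlinarith

end QML


namespace QML
open Filter Topology Finset

lemma poch_summable {q : ℝ} (hq0 : 0 < q) (hq1 : q < 1) (a : ℝ) :
    Summable (fun k : ℕ => ‖-(a * q ^ k)‖) := by
  have : Summable (fun k : ℕ => a * q ^ k) := (summable_geometric_of_lt_one hq0.le hq1).mul_left a
  exact this.neg.norm

lemma poch_ne {q : ℝ} (hq0 : 0 < q) (hq1 : q < 1) {a : ℝ} (ha0 : 0 ≤ a) (ha : a < 1) :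
    qPochInf a q ≠ 0 := by
  have := tprod_one_add_ne_zero_of_summable (f := fun k : ℕ => -(a * q ^ k)) (by
    intro k
    have h1 : q ^ k ≤ 1 := pow_le_one₀ hq0.le hq1.le
    have h0 : 0 < q ^ k := by positivity
    have : 0 < 1 + -(a * q ^ k) := by nlinarith
    exact this.ne') (poch_summable hq0 hq1 a)
  simpa [qPochInf, sub_eq_add_neg] using this

lemma poch_succ {q : ℝ} (hq0 : 0 < q) (hq1 : q < 1) (a : ℝ) :
    qPochInf a q = (1 - a) * qPochInf (a * q) q := by
  have hm : Multipliable (fun k : ℕ => 1 + -(a * q * q ^ k)) :=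
    multipliable_one_add_of_summable (poch_summable hq0 hq1 (a * q))
  have h := tprod_eq_zero_mul' (f := fun k : ℕ => 1 - a * q ^ k) (by
    convert hm using 2
    ring)
  rw [qPochInf, h, qPochInf]
  simp only [pow_zero, mul_one]
  congr 1
  apply tprod_congr
  intro k; ring

lemma qGamma_ne {q : ℝ} (hq0 : 0 < q) (hq1 : q < 1) {x : ℝ} (hx : 0 < x) : qGamma q x ≠ 0 := by
  rw [qGamma]
  refine div_ne_zero (mul_ne_zero (poch_ne hq0 hq1 hq0.le hq1) ?_)
    (poch_ne hq0 hq1 (by positivity) (Real.rpow_lt_one hq0.le hq1 hx))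
  exact (Real.rpow_pos_of_pos (by linarith) _).ne'

lemma qGamma_succ {q : ℝ} (hq0 : 0 < q) (hq1 : q < 1) {x : ℝ} (hx : 0 < x) :
    qGamma q (x + 1) = qGamma q x * ((1 - q ^ x) / (1 - q)) := by
  have h1 : 0 < 1 - q := by linarith
  have h2 : q ^ x < 1 := Real.rpow_lt_one hq0.le hq1 hx
  have h2' : 1 - q ^ x ≠ 0 := by linarith
  have h3 := poch_succ hq0 hq1 (q ^ x)
  have e : q ^ (x + 1) = q ^ x * q := by rw [Real.rpow_add hq0, Real.rpow_one]
  have h4 : qPochInf (q ^ x * q) q ≠ 0 := by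
    rw [← e]
    exact poch_ne hq0 hq1 (by positivity) (Real.rpow_lt_one hq0.le hq1 (by linarith))
  have e2 : (1 - q) ^ (1 - x) = (1 - q) ^ (1 - (x + 1)) * (1 - q) := by
    rw [← Real.rpow_add_one h1.ne']; congr 1; ring
  rw [qGamma, qGamma, h3, e, e2]
  field_simp

/-- normalized coefficients -/
noncomputable def cf (γ σ q : ℝ) (n : ℕ) : ℝ :=
  qGamma q (γ + 1) * (σ ^ (2 * n) * q ^ (n * (n - 1)) / qGamma q (2 * n + γ + 1))

noncomputable def rt (γ σ q : ℝ) (n : ℕ) : ℝ :=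
  σ ^ 2 * (1 - q) ^ 2 * (q ^ 2) ^ n / ((1 - q ^ (2 * n + γ + 1)) * (1 - q ^ (2 * n + γ + 2)))

section
variable {γ σ q : ℝ}

lemma cf_zero (hq0 : 0 < q) (hq1 : q < 1) (hγ0 : 0 ≤ γ) : cf γ σ q 0 = 1 := by
  have := qGamma_ne hq0 hq1 (x := γ + 1) (by linarith)
  simp [cf, this]

lemma den_pos (hq0 : 0 < q) (hq1 : q < 1) (hγ0 : 0 ≤ γ) (n : ℕ) : 0 < 1 - q ^ (2 * n + γ + 1) ∧ 0 < 1 - q ^ (2 * n + γ + 2) := by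
  have h0 : (0:ℝ) ≤ n := Nat.cast_nonneg n
  constructor
  · have := Real.rpow_lt_one hq0.le hq1 (z := 2 * n + γ + 1) (by linarith); linarith
  · have := Real.rpow_lt_one hq0.le hq1 (z := 2 * n + γ + 2) (by linarith); linarith

lemma cf_succ (hq0 : 0 < q) (hq1 : q < 1) (hγ0 : 0 ≤ γ) (n : ℕ) : cf γ σ q (n+1) = cf γ σ q n * rt γ σ q n := by
  have h0 : (0:ℝ) ≤ n := Nat.cast_nonneg n
  have h1 : qGamma q (2 * n + γ + 1) ≠ 0 := qGamma_ne hq0 hq1 (by linarith)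
  obtain ⟨d1, d2⟩ := den_pos hq0 hq1 hγ0 n
  have e1 := qGamma_succ hq0 hq1 (x := 2 * n + γ + 1) (by linarith)
  have e2 := qGamma_succ hq0 hq1 (x := 2 * n + γ + 1 + 1) (by linarith)
  have e3 : (2 * ((n+1 : ℕ):ℝ) + γ + 1) = 2 * n + γ + 1 + 1 + 1 := by push_cast; ring
  have e4 : (2 * (n:ℝ) + γ + 1 + 1) = 2 * n + γ + 2 := by ring
  have e5 : q ^ ((n+1) * (n + 1 - 1)) = q ^ (n * (n-1)) * (q ^ 2) ^ n := by
    rw [← pow_mul, ← pow_add]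
    congr 1
    rcases n with _ | n
    · rfl
    · simp only [Nat.add_sub_cancel]; ring
  have h1q : 1 - q ≠ 0 := by linarith
  rw [cf, cf, rt, e3, e2, e1, e5, e4]
  have := d1.ne'
  have := d2.ne'
  field_simp
  ring

lemma rt_pos (hq0 : 0 < q) (hq1 : q < 1) (hσ : 0 < σ) (hγ0 : 0 ≤ γ) (n : ℕ) : 0 < rt γ σ q n := by
  obtain ⟨d1, d2⟩ := den_pos hq0 hq1 hγ0 n
  have h1q : 0 < 1 - q := by linarith
  rw [rt]; positivity

lemma cf_pos (hq0 : 0 < q) (hq1 : q < 1) (hσ : 0 < σ) (hγ0 : 0 ≤ γ) (n : ℕ) : 0 < cf γ σ q n := by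
  induction n with
  | zero => rw [cf_zero hq0 hq1 hγ0]; norm_num
  | succ n ih =>
    rw [cf_succ hq0 hq1 hγ0]
    exact mul_pos ih (rt_pos hq0 hq1 hσ hγ0 n)

lemma rt_le (hq0 : 0 < q) (hq1 : q < 1) (hσ : 0 < σ) (hγ0 : 0 ≤ γ) (n : ℕ) : rt γ σ q (n+1) ≤ q ^ 2 * rt γ σ q n := by
  obtain ⟨d1, d2⟩ := den_pos hq0 hq1 hγ0 n
  obtain ⟨d3, d4⟩ := den_pos hq0 hq1 hγ0 (n+1)
  have h1q : 0 < 1 - q := by linarith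
  have m1 : q ^ (2 * ((n+1:ℕ):ℝ) + γ + 1) ≤ q ^ (2 * (n:ℝ) + γ + 1) :=
    Real.rpow_le_rpow_of_exponent_ge hq0 hq1.le (by push_cast; linarith)
  have m2 : q ^ (2 * ((n+1:ℕ):ℝ) + γ + 2) ≤ q ^ (2 * (n:ℝ) + γ + 2) :=
    Real.rpow_le_rpow_of_exponent_ge hq0 hq1.le (by push_cast; linarith)
  rw [rt, rt, ← mul_div_assoc]
  have e : q ^ 2 * (σ ^ 2 * (1 - q) ^ 2 * (q ^ 2) ^ n) = σ ^ 2 * (1 - q) ^ 2 * (q ^ 2) ^ (n+1) := by ring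
  rw [e]
  apply div_le_div_of_nonneg_left (by positivity) (by positivity)
  apply mul_le_mul (by linarith) (by linarith) d2.le d3.le

lemma rt_tendsto (hq0 : 0 < q) (hq1 : q < 1) (hσ : 0 < σ) (hγ0 : 0 ≤ γ) : Tendsto (rt γ σ q) atTop (𝓝 0) := by
  have hb : ∀ n, rt γ σ q n ≤ rt γ σ q 0 * (q ^ 2) ^ n := by
    intro n
    induction n with
    | zero => simp
    | succ n ih =>
      have := rt_le hq0 hq1 hσ hγ0 n
      have h2 : q ^ 2 * rt γ σ q n ≤ q ^ 2 * (rt γ σ q 0 * (q ^ 2) ^ n) :=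
        mul_le_mul_of_nonneg_left ih (by positivity)
      calc _ ≤ _ := this.trans h2
        _ = _ := by ring
  have t : Tendsto (fun n => rt γ σ q 0 * (q ^ 2) ^ n) atTop (𝓝 (rt γ σ q 0 * 0)) :=
    (tendsto_pow_atTop_nhds_zero_of_lt_one (by positivity) (by nlinarith)).const_mul _
  rw [mul_zero] at t
  exact squeeze_zero (fun n => (rt_pos hq0 hq1 hσ hγ0 n).le) hb t

lemma cf_summable (hq0 : 0 < q) (hq1 : q < 1) (hσ : 0 < σ) (hγ0 : 0 ≤ γ) (R : ℝ) (hR : 0 ≤ R) :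
    Summable (fun n : ℕ => (2 * n + 1) ^ 2 * cf γ σ q n * R ^ n) := by
  have t := (rt_tendsto hq0 hq1 hσ hγ0).const_mul (9 * R)
  rw [mul_zero] at t
  apply summable_of_ratio_norm_eventually_le (r := 1 / 2) (by norm_num)
  filter_upwards [t.eventually (gt_mem_nhds (show (0:ℝ) < 1 / 2 by norm_num))] with n hn
  have h1 := cf_pos hq0 hq1 hσ hγ0 n
  have h2 := cf_pos hq0 hq1 hσ hγ0 (n+1)
  have h3 := rt_pos hq0 hq1 hσ hγ0 n
  have h0 : (0:ℝ) ≤ n := Nat.cast_nonneg n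
  rw [Real.norm_of_nonneg (by positivity), Real.norm_of_nonneg (by positivity),
    cf_succ hq0 hq1 hγ0]
  have h4 : (2 * ((n+1:ℕ):ℝ) + 1) ^ 2 ≤ 9 * (2 * n + 1) ^ 2 := by push_cast; nlinarith
  have h5 : 0 ≤ (2 * (n:ℝ) + 1) ^ 2 * cf γ σ q n * R ^ n := by positivity
  calc _ = (2 * ((n+1:ℕ):ℝ) + 1) ^ 2 * (cf γ σ q n * rt γ σ q n * R ^ (n+1)) := by ring
    _ ≤ 9 * (2 * n + 1) ^ 2 * (cf γ σ q n * rt γ σ q n * R ^ (n+1)) :=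
      mul_le_mul_of_nonneg_right h4 (by positivity)
    _ = (9 * R * rt γ σ q n) * ((2 * (n:ℝ) + 1) ^ 2 * cf γ σ q n * R ^ n) := by ring
    _ ≤ _ := mul_le_mul_of_nonneg_right hn.le h5

lemma cf_approx (hq0 : 0 < q) (hq1 : q < 1) (hσ : 0 < σ) (hγ0 : 0 ≤ γ) (hR : condR q γ) : Approx (cf γ σ q) := by
  have hp0 : 0 < q ^ 2 := by positivity
  have hp1 : q ^ 2 < 1 := by nlinarith
  have h1q : 0 < 1 - q := by linarith
  have hs : 0 < σ ^ 2 * (1 - q) ^ 2 := by positivity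
  rcases hR with (h | h) | ⟨-, -, h⟩
  · subst h
    apply approx_mesh hp0 hp1 hq0.le hq1 hs _ (cf_zero hq0 hq1 le_rfl)
    intro n
    rw [cf_succ hq0 hq1 le_rfl, rt]
    have e1 : q ^ (2 * (n:ℝ) + 0 + 1) = q * (q ^ 2) ^ n := by
      rw [← pow_mul, ← pow_succ', ← Real.rpow_natCast]; push_cast; congr 1; ring
    have e2 : q ^ (2 * (n:ℝ) + 0 + 2) = (q ^ 2) ^ (n + 1) := by
      rw [← pow_mul, ← Real.rpow_natCast]; push_cast; congr 1; ring
    rw [e1, e2, mul_comm (1 - q * (q ^ 2) ^ n)]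
  · subst h
    have ha : q ^ 3 < 1 := pow_lt_one₀ hq0.le hq1 (by norm_num)
    apply approx_mesh hp0 hp1 (a := q ^ 3) (by positivity) ha hs _ (cf_zero hq0 hq1 zero_le_one)
    intro n
    rw [cf_succ hq0 hq1 zero_le_one, rt]
    have e1 : q ^ (2 * (n:ℝ) + 1 + 1) = (q ^ 2) ^ (n + 1) := by
      rw [← pow_mul, ← Real.rpow_natCast]; push_cast; congr 1; ring
    have e2 : q ^ (2 * (n:ℝ) + 1 + 2) = q ^ 3 * (q ^ 2) ^ n := by
      rw [← pow_mul, ← pow_add, ← Real.rpow_natCast]; push_cast; congr 1; ring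
    rw [e1, e2]
  · apply approx_hutch _ (cf_zero hq0 hq1 hγ0) (cf_pos hq0 hq1 hσ hγ0)
    have hq : q < 1 / 2 := by
      have a1 : 0 < q ^ (γ + 1) := by positivity
      have a2 : 0 < q ^ (γ + 2) := by positivity
      have b1 : q ^ (γ + 1) < 1 := Real.rpow_lt_one hq0.le hq1 (by linarith)
      have b2 : q ^ (γ + 2) < 1 := Real.rpow_lt_one hq0.le hq1 (by linarith)
      have c0 : 0 < q⁻¹ * (1 - q) := by positivity
      have c1 : q⁻¹ * (1 - q) * (1 - q ^ (γ + 1)) ≤ q⁻¹ * (1 - q) := by nlinarith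
      have c1' : 0 ≤ q⁻¹ * (1 - q) * (1 - q ^ (γ + 1)) := mul_nonneg c0.le (by linarith)
      have c2 : q⁻¹ * (1 - q) * (1 - q ^ (γ + 1)) * (1 - q ^ (γ + 2)) ≤ q⁻¹ * (1 - q) := by
        nlinarith
      have c3 : 1 < q⁻¹ * (1 - q) := lt_of_lt_of_le h c2
      rw [inv_mul_eq_div, one_lt_div hq0] at c3
      linarith
    intro n
    have h1 := cf_pos hq0 hq1 hσ hγ0 n
    have h2 := rt_pos hq0 hq1 hσ hγ0 n
    have h3 := rt_le hq0 hq1 hσ hγ0 n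
    have h5 := cf_succ hq0 hq1 (σ := σ) hγ0 (n+1)
    have h6 := cf_succ hq0 hq1 (σ := σ) hγ0 n
    rw [show n + 1 + 1 = n + 2 from rfl] at h5
    rw [h5, h6]
    have h4 : 4 * rt γ σ q (n+1) < rt γ σ q n := by
      have : q ^ 2 < 1 / 4 := by nlinarith
      nlinarith
    have h7 : 0 < cf γ σ q n ^ 2 * rt γ σ q n := by positivity
    nlinarith
end

lemma hasDeriv_series {c : ℕ → ℂ} {e : ℕ → ℕ}
    (hs : ∀ R : ℝ, 0 ≤ R → Summable (fun n => ‖c n‖ * R ^ e n)) (z : ℂ) :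
    HasDerivAt (fun z : ℂ => ∑' n, c n * z ^ e n) (∑' n, c n * (e n * z ^ (e n - 1))) z := by
  have hle : ∀ (n : ℕ) (w : ℂ), w ∈ Metric.ball (0:ℂ) (‖z‖ + 1) →
      ‖c n * w ^ e n‖ ≤ ‖c n‖ * (‖z‖ + 1) ^ e n := by
    intro n w hw
    rw [norm_mul, norm_pow]
    apply mul_le_mul_of_nonneg_left _ (norm_nonneg _)
    apply pow_le_pow_left₀ (norm_nonneg _)
    simpa using (Metric.mem_ball.1 hw).le
  have hd : ∀ n : ℕ, DifferentiableOn ℂ (fun w : ℂ => c n * w ^ e n) (Metric.ball (0:ℂ) (‖z‖ + 1)) := by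
    intro n; fun_prop
  have hz : z ∈ Metric.ball (0:ℂ) (‖z‖ + 1) := by simp
  have hsm := hs (‖z‖ + 1) (by positivity)
  have h1 := Complex.differentiableOn_tsum_of_summable_norm hsm hd Metric.isOpen_ball hle
  have h2 := Complex.hasSum_deriv_of_summable_norm hsm hd Metric.isOpen_ball hle hz
  have h3 := (h1.differentiableAt (Metric.isOpen_ball.mem_nhds hz)).hasDerivAt
  rw [← h2.tsum_eq] at h3
  have e' : ∀ n, deriv (fun w : ℂ => c n * w ^ e n) z = c n * (e n * z ^ (e n - 1)) := by
    intro n; simp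
  simp only [e'] at h3
  exact h3

end QML


namespace QML
open Filter Topology Finset

section
variable {γ σ q : ℝ}

/-- coefficients of the derivative of `g` in the variable `z^2` -/
noncomputable def kf (γ σ q : ℝ) (n : ℕ) : ℝ := (2 * n + 1) * cf γ σ q n

lemma gML_eq (z : ℂ) : gML γ σ q z = ∑' n : ℕ, (((-1)^n * cf γ σ q n : ℝ) : ℂ) * z ^ (2 * n + 1) := by
  rw [gML, qML, ← tsum_mul_left]
  apply tsum_congr
  intro n
  rw [cf]
  push_cast
  ring

lemma gML_ofReal (x : ℝ) : gML γ σ q x = (gMLR γ σ q x : ℂ) := by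
  rw [gML, gMLR, qML, qMLR]
  push_cast
  rfl

lemma kf_summable (hq0 : 0 < q) (hq1 : q < 1) (hσ : 0 < σ) (hγ0 : 0 ≤ γ) (R : ℝ) (hR : 0 ≤ R) : Summable (fun n : ℕ => kf γ σ q n * R ^ n) := by
  refine Summable.of_nonneg_of_le (fun n => ?_) (fun n => ?_) (cf_summable hq0 hq1 hσ hγ0 R hR)
  · have := cf_pos hq0 hq1 hσ hγ0 n
    rw [kf]; positivity
  · have h1 := cf_pos hq0 hq1 hσ hγ0 n
    have h0 : (0:ℝ) ≤ n := Nat.cast_nonneg n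
    rw [kf]
    apply mul_le_mul_of_nonneg_right _ (by positivity)
    apply mul_le_mul_of_nonneg_right _ h1.le
    nlinarith

lemma kf_summable' (hq0 : 0 < q) (hq1 : q < 1) (hσ : 0 < σ) (hγ0 : 0 ≤ γ) (R : ℝ) (hR : 0 ≤ R) : Summable (fun n : ℕ => (n * kf γ σ q n) * R ^ n) := by
  refine Summable.of_nonneg_of_le (fun n => ?_) (fun n => ?_) (cf_summable hq0 hq1 hσ hγ0 R hR)
  · have := cf_pos hq0 hq1 hσ hγ0 n
    rw [kf]; positivity
  · have h1 := cf_pos hq0 hq1 hσ hγ0 n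
    have h0 : (0:ℝ) ≤ n := Nat.cast_nonneg n
    rw [kf, ← mul_assoc]
    apply mul_le_mul_of_nonneg_right _ (by positivity)
    apply mul_le_mul_of_nonneg_right _ h1.le
    nlinarith

lemma gML_deriv (hq0 : 0 < q) (hq1 : q < 1) (hσ : 0 < σ) (hγ0 : 0 ≤ γ) (z : ℂ) : HasDerivAt (gML γ σ q) (Fc (kf γ σ q) (z ^ 2)) z := by
  have h := hasDeriv_series (c := fun n => (((-1)^n * cf γ σ q n : ℝ) : ℂ)) (e := fun n => 2 * n + 1)
    (by
      intro R hR
      refine Summable.of_nonneg_of_le (fun n => by positivity) (fun n => ?_)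
        ((cf_summable hq0 hq1 hσ hγ0 (R ^ 2) (by positivity)).mul_left R)
      have h1 := cf_pos hq0 hq1 hσ hγ0 n
      have h0 : (0:ℝ) ≤ n := Nat.cast_nonneg n
      rw [Complex.norm_real, norm_mul, norm_pow, norm_neg, norm_one, one_pow, one_mul,
        Real.norm_of_nonneg h1.le]
      have : 0 ≤ cf γ σ q n * R ^ (2 * n + 1) := by positivity
      have h2 : (1:ℝ) ≤ (2 * n + 1) ^ 2 := by nlinarith
      calc _ ≤ (2 * (n:ℝ) + 1) ^ 2 * (cf γ σ q n * R ^ (2 * n + 1)) := by nlinarith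
        _ = _ := by ring) z
  have e : gML γ σ q = fun z : ℂ => ∑' n : ℕ, (((-1)^n * cf γ σ q n : ℝ) : ℂ) * z ^ (2 * n + 1) :=
    funext gML_eq
  rw [e]
  convert h using 1
  rw [Fc]
  apply tsum_congr
  intro n
  rw [kf, ← pow_mul]
  push_cast
  try simp only [Nat.add_sub_cancel]
  ring

lemma gML_deriv_eq (hq0 : 0 < q) (hq1 : q < 1) (hσ : 0 < σ) (hγ0 : 0 ≤ γ) : deriv (gML γ σ q) = fun z => Fc (kf γ σ q) (z ^ 2) :=
  funext fun z => (gML_deriv hq0 hq1 hσ hγ0 z).deriv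

lemma gML_deriv2 (hq0 : 0 < q) (hq1 : q < 1) (hσ : 0 < σ) (hγ0 : 0 ≤ γ) (z : ℂ) : ∃ d, HasDerivAt (deriv (gML γ σ q)) d z ∧
    z * d = 2 * Fc (fun n => n * kf γ σ q n) (z ^ 2) := by
  have h := hasDeriv_series (c := fun n => (((-1)^n * kf γ σ q n : ℝ) : ℂ)) (e := fun n => 2 * n)
    (by
      intro R hR
      refine (kf_summable hq0 hq1 hσ hγ0 (R ^ 2) (by positivity)).congr (fun n => ?_)
      have h1 := cf_pos hq0 hq1 hσ hγ0 n
      have h2 : 0 ≤ kf γ σ q n := by rw [kf]; positivity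
      rw [Complex.norm_real, norm_mul, norm_pow, norm_neg, norm_one, one_pow, one_mul,
        Real.norm_of_nonneg h2, pow_mul]) z
  rw [gML_deriv_eq hq0 hq1 hσ hγ0]
  have e : (fun z : ℂ => Fc (kf γ σ q) (z ^ 2)) =
      fun z : ℂ => ∑' n : ℕ, (((-1)^n * kf γ σ q n : ℝ) : ℂ) * z ^ (2 * n) := by
    funext z
    simp only [Fc, pow_mul]
  rw [e]
  refine ⟨_, h, ?_⟩
  rw [← tsum_mul_left, Fc, ← tsum_mul_left]
  apply tsum_congr
  intro n
  rcases n with _ | n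
  · simp
  · rw [← pow_mul, show 2 * (n+1) - 1 = 2 * n + 1 by omega]
    push_cast
    ring

lemma gMLR_deriv (hq0 : 0 < q) (hq1 : q < 1) (hσ : 0 < σ) (hγ0 : 0 ≤ γ) (x : ℝ) : HasDerivAt (gMLR γ σ q) (Fr (kf γ σ q) (x ^ 2)) x := by
  have h := (gML_deriv hq0 hq1 hσ hγ0 (x:ℂ)).real_of_complex
  rw [← Complex.ofReal_pow, Fc_ofReal, Complex.ofReal_re] at h
  convert h using 1
  funext t
  rw [gML_ofReal, Complex.ofReal_re]

lemma gMLR_deriv_eq (hq0 : 0 < q) (hq1 : q < 1) (hσ : 0 < σ) (hγ0 : 0 ≤ γ) : deriv (gMLR γ σ q) = fun x => Fr (kf γ σ q) (x ^ 2) :=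
  funext fun z => (gMLR_deriv hq0 hq1 hσ hγ0 z).deriv

lemma gMLR_deriv2 (hq0 : 0 < q) (hq1 : q < 1) (hσ : 0 < σ) (hγ0 : 0 ≤ γ) (x : ℝ) : ∃ d, HasDerivAt (deriv (gMLR γ σ q)) d x ∧
    x * d = 2 * Fr (fun n => n * kf γ σ q n) (x ^ 2) := by
  obtain ⟨d, hd, he⟩ := gML_deriv2 hq0 hq1 hσ hγ0 (x:ℂ)
  refine ⟨d.re, ?_, ?_⟩
  · have h := hd.real_of_complex
    convert h using 1
    funext t
    rw [gML_deriv_eq hq0 hq1 hσ hγ0, gMLR_deriv_eq hq0 hq1 hσ hγ0]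
    beta_reduce
    rw [← Complex.ofReal_pow, Fc_ofReal, Complex.ofReal_re]
  · rw [← Complex.ofReal_pow, Fc_ofReal] at he
    have := congrArg Complex.re he
    simpa using this

end
end QML

open QML in
theorem stmt14 (q σ γ : ℝ) (hq0 : 0 < q) (hq1 : q < 1) (hσ : 0 < σ)
    (hγ0 : 0 ≤ γ) (hγ2 : γ < 2) (hR : condR q γ)
    (α : ℝ) (hα0 : 0 ≤ α) (hα1 : α < 1)
    (θ1 : ℝ)
    (hθ1 : IsLeast {x : ℝ | 0 < x ∧ deriv (gMLR γ σ q) x = 0} θ1) :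
    ∃ r₂ : ℝ,
      (r₂ ∈ Set.Ioo 0 θ1 ∧
        1 + r₂ * deriv (deriv (gMLR γ σ q)) r₂ / deriv (gMLR γ σ q) r₂ = α) ∧
      (∀ r : ℝ, r ∈ Set.Ioo 0 θ1 →
        1 + r * deriv (deriv (gMLR γ σ q)) r / deriv (gMLR γ σ q) r = α → r = r₂) ∧
      radiusConvex α (gML γ σ q) = r₂ := by
  have kpos : ∀ n, 0 < kf γ σ q n := fun n => by
    have := cf_pos hq0 hq1 hσ hγ0 n
    rw [kf]; positivity
  have k0 : kf γ σ q 0 = 1 := by simp [kf, cf_zero hq0 hq1 hγ0]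
  have hsum := kf_summable hq0 hq1 hσ hγ0
  have hsum' := kf_summable' hq0 hq1 hσ hγ0
  have hA : Approx (kf γ σ q) := (cf_approx hq0 hq1 hσ hγ0 hR).rolle
  have hd1 : ∀ x, deriv (gMLR γ σ q) x = Fr (kf γ σ q) (x ^ 2) := fun x =>
    (gMLR_deriv hq0 hq1 hσ hγ0 x).deriv
  have hd2 : ∀ x, x * deriv (deriv (gMLR γ σ q)) x = 2 * Fr (fun n => n * kf γ σ q n) (x ^ 2) := by
    intro x
    obtain ⟨d, h, e⟩ := gMLR_deriv2 hq0 hq1 hσ hγ0 x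
    rw [h.deriv, e]
  have hc1 : ∀ z, deriv (gML γ σ q) z = Fc (kf γ σ q) (z ^ 2) := fun x =>
    (gML_deriv hq0 hq1 hσ hγ0 x).deriv
  have hc2 : ∀ z, z * deriv (deriv (gML γ σ q)) z = 2 * Fc (fun n => n * kf γ σ q n) (z ^ 2) := by
    intro x
    obtain ⟨d, h, e⟩ := gML_deriv2 hq0 hq1 hσ hγ0 x
    rw [h.deriv, e]
  have contF : Continuous (Fr (kf γ σ q)) := Fr_continuous (fun n => (kpos n).le) hsum
  have contD : Continuous (Fr (fun n => n * kf γ σ q n)) :=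
    Fr_continuous (fun n => mul_nonneg (Nat.cast_nonneg n) (kpos n).le) hsum'
  obtain ⟨⟨hθ0, hθz⟩, hmin⟩ := hθ1
  rw [hd1] at hθz
  have F0 : Fr (kf γ σ q) 0 = 1 := by
    rw [Fr, tsum_eq_single 0]
    · simp [k0]
    · intro n hn; simp [hn]
  have D0 : Fr (fun n => n * kf γ σ q n) 0 = 0 := by
    rw [Fr, tsum_eq_single 0]
    · simp
    · intro n hn; simp [hn]
  have hpos' : ∀ x, 0 ≤ x → x < θ1 → 0 < Fr (kf γ σ q) (x ^ 2) := by
    intro x hx0 hx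
    by_contra hcon
    push Not at hcon
    obtain ⟨y, hy, hy0⟩ := intermediate_value_Icc' (f := fun t => Fr (kf γ σ q) (t ^ 2)) hx0
      (by fun_prop) (show (0:ℝ) ∈ Set.Icc _ _ from ⟨hcon, by simp [F0]⟩)
    have hyp : 0 < y := by
      rcases hy.1.lt_or_eq with h | h
      · exact h
      · subst h; simp [F0] at hy0
    have := hmin ⟨hyp, by rw [hd1]; exact hy0⟩
    linarith [hy.2]
  have hpos : ∀ t, 0 ≤ t → t < θ1 ^ 2 → 0 < Fr (kf γ σ q) t := by
    intro t ht0 ht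
    have := hpos' (√t) (Real.sqrt_nonneg _) ((Real.sqrt_lt' hθ0).2 ht)
    rwa [Real.sq_sqrt ht0] at this
  obtain ⟨L1, L2⟩ := limit_facts (kpos 1) (fun n => (kpos n).le) hsum hsum' hA hpos
  set u : ℝ → ℝ := fun r => 1 + r * deriv (deriv (gMLR γ σ q)) r / deriv (gMLR γ σ q) r with hu
  have hu' : ∀ r, u r = 1 + 2 * (Fr (fun n => n * kf γ σ q n) (r ^ 2) / Fr (kf γ σ q) (r ^ 2)) := by
    intro r
    simp only [hu]
    rw [hd2, hd1, mul_div_assoc]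
  have hanti : ∀ r r', 0 < r → r < r' → r' < θ1 → u r' < u r := by
    intro r r' h0 h1 h2
    rw [hu', hu']
    have := L2 (r ^ 2) (r' ^ 2) (by positivity) (by nlinarith) (by nlinarith)
    linarith
  have hu0 : u 0 = 1 := by simp [hu]
  -- a point where u vanishes
  obtain ⟨c, hc, hc0⟩ := exists_hasDerivAt_eq_zero (f := fun t => t * deriv (gMLR γ σ q) t)
    (f' := fun t => 1 * deriv (gMLR γ σ q) t + t * deriv (deriv (gMLR γ σ q)) t) hθ0
    (by
      rw [gMLR_deriv_eq hq0 hq1 hσ hγ0]; fun_prop)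
    (by simp only [hd1, hθz]; simp) (by
      intro t _
      obtain ⟨d, h, e⟩ := gMLR_deriv2 hq0 hq1 hσ hγ0 t
      have h' := h
      rw [← h.deriv] at h'
      exact (hasDerivAt_id t).mul h')
  have huc : u c = 0 := by
    have hp := hpos' c hc.1.le hc.2
    rw [← hd1] at hp
    simp only [hu]
    field_simp
    linarith
  have hcont : ContinuousOn u (Set.Icc 0 c) := by
    have : u = fun r => 1 + 2 * (Fr (fun n => n * kf γ σ q n) (r ^ 2) / Fr (kf γ σ q) (r ^ 2)) :=
      funext hu'
    rw [this]
    intro r hr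
    have hp := hpos' r hr.1 (lt_of_le_of_lt hr.2 hc.2)
    apply ContinuousAt.continuousWithinAt
    have h1 : ContinuousAt (fun r : ℝ => Fr (fun n => n * kf γ σ q n) (r ^ 2)) r := by fun_prop
    have h2 : ContinuousAt (fun r : ℝ => Fr (kf γ σ q) (r ^ 2)) r := by fun_prop
    exact ((h1.div h2 hp.ne').const_mul 2).const_add 1
  obtain ⟨r₂, hr, hrα⟩ := intermediate_value_Icc' hc.1.le hcont
    (show α ∈ Set.Icc (u c) (u 0) by rw [huc, hu0]; exact ⟨hα0, hα1.le⟩)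
  have hr0 : 0 < r₂ := by
    rcases hr.1.lt_or_eq with h | h
    · exact h
    · subst h; rw [hu0] at hrα; linarith
  have hrθ : r₂ < θ1 := lt_of_le_of_lt hr.2 hc.2
  refine ⟨r₂, ⟨⟨hr0, hrθ⟩, hrα⟩, ?_, ?_⟩
  · intro r hrI hre
    have hre' : u r = α := hre
    rcases lt_trichotomy r r₂ with h | h | h
    · have := hanti r r₂ hrI.1 h hrθ; linarith
    · exact h
    · have := hanti r₂ r hr0 h hrI.2; linarith
  · rw [radiusConvex]
    apply IsGreatest.csSup_eq
    constructor
    · refine ⟨hr0, ?_⟩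
      intro z hz
      rw [hc1, hc2, mul_div_assoc]
      have hzθ : ‖z ^ 2‖ < θ1 ^ 2 := by
        rw [norm_pow]
        have := norm_nonneg z
        nlinarith
      have h1 := L1 (z ^ 2) hzθ
      rw [norm_pow] at h1
      have h2 : α < u ‖z‖ := by
        rcases (norm_nonneg z).lt_or_eq with h | h
        · have := hanti ‖z‖ r₂ h hz hrθ; linarith
        · rw [← h, hu0]; exact hα1
      rw [hu'] at h2
      have e : (1 + 2 * (Fc (fun n => n * kf γ σ q n) (z ^ 2) / Fc (kf γ σ q) (z ^ 2))).re =
          1 + 2 * (Fc (fun n => n * kf γ σ q n) (z ^ 2) / Fc (kf γ σ q) (z ^ 2)).re := by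
        simp
      rw [e]
      linarith
    · intro r hrr
      by_contra hcon
      push Not at hcon
      have := hrr.2 (r₂ : ℂ) (by rw [Complex.norm_real, Real.norm_of_nonneg hr0.le]; exact hcon)
      rw [hc1, hc2, mul_div_assoc, ← Complex.ofReal_pow, Fc_ofReal, Fc_ofReal] at this
      have e : ((1 + 2 * (((Fr (fun n => n * kf γ σ q n) (r₂ ^ 2) : ℝ) : ℂ) /
          ((Fr (kf γ σ q) (r₂ ^ 2) : ℝ) : ℂ)) : ℂ)).re = u r₂ := by
        rw [hu', ← Complex.ofReal_div]
        simp
      rw [e, hrα] at this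
      exact lt_irrefl _ this
end
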